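/- arXiv:2112.06272 — 3 statements merged into one kernel-verified Lean document; each statement's English description precedes it below -/
import Mathlib

section
/- Let N ≥ 2 be an integer, let Ω ⊆ ℝ^N be a bounded Lipschitz open set, and fix s₀ ∈ [1/2, 1). Then limsup_{s ↘ s₀} S_{N,s}(Ω) ≤ S_{N,s₀}(Ω). -/
open MeasureTheory Real Filter Topology Set

noncomputable section

/-- Euclidean space ℝ^N. -/
abbrev Euc (N : ℕ) := EuclideanSpace ℝ (Fin N)

/-- The normalization constant c_{N,s}. -/
def cNs (N : ℕ) (s : ℝ) : ℝ :=
  s * (4 : ℝ) ^ s * Real.Gamma (((N : ℝ) + 2 * s) / 2) /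
    (Real.pi ^ ((N : ℝ) / 2) * Real.Gamma (1 - s))

/-- The Gagliardo quadratic form Q_{N,s,U}. -/
def gagliardo (N : ℕ) (s : ℝ) (U : Set (Euc N)) (u : Euc N → ℝ) : ℝ :=
  (cNs N s / 2) * ∫ x in U, ∫ y in U, (u x - u y) ^ 2 / ‖x - y‖ ^ ((N : ℝ) + 2 * s)

/-- The L^p norm of u on a set U. -/
def lpNormOn (N : ℕ) (p : ℝ) (U : Set (Euc N)) (u : Euc N → ℝ) : ℝ :=
  (∫ x in U, |u x| ^ p) ^ (1 / p)

/-- The fractional critical Sobolev exponent 2*_s = 2N/(N-2s). -/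
def critExp (N : ℕ) (s : ℝ) : ℝ := 2 * (N : ℝ) / ((N : ℝ) - 2 * s)

/-- Smooth compactly supported test function in U. -/
def testFun (N : ℕ) (U : Set (Euc N)) (u : Euc N → ℝ) : Prop :=
  ContDiff ℝ (⊤ : ℕ∞) u ∧ HasCompactSupport u ∧ tsupport u ⊆ U

/-- The critical fractional Sobolev constant S_{N,s}(U). -/
def sobolevConst (N : ℕ) (s : ℝ) (U : Set (Euc N)) : ℝ :=
  sInf { r | ∃ u, testFun N U u ∧ ¬ (∀ x, u x = 0) ∧
    r = gagliardo N s U u / (lpNormOn N (critExp N s) U u) ^ 2 }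

/-- The open cylinder B'_r × (-r, r) in ℝ^{N-1} × ℝ. -/
def cylinder (N : ℕ) (r : ℝ) : Set (EuclideanSpace ℝ (Fin (N - 1)) × ℝ) :=
  (Metric.ball 0 r) ×ˢ (Set.Ioo (-r) r)

/-- A bounded open set is Lipschitz: near each boundary point the boundary is the
bi-Lipschitz image of a flat piece. -/
def IsLipschitzSet (N : ℕ) (Ω : Set (Euc N)) : Prop :=
  ∀ q ∈ frontier Ω, ∃ (r C : ℝ) (Φ : EuclideanSpace ℝ (Fin (N - 1)) × ℝ → Euc N),
    0 < r ∧ 1 < C ∧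
    (∀ x ∈ cylinder N r, ∀ y ∈ cylinder N r,
      C⁻¹ * dist x y ≤ dist (Φ x) (Φ y) ∧ dist (Φ x) (Φ y) ≤ C * dist x y) ∧
    IsOpen (Φ '' cylinder N r) ∧ q ∈ Φ '' cylinder N r ∧
    Φ '' ((Metric.ball 0 r) ×ˢ (Set.Ioo 0 r)) ⊆ Ω ∧
    Φ '' ((Metric.ball 0 r) ×ˢ ({0} : Set ℝ)) ⊆ frontier Ω

/-- Membership in H^s_0(U): approximation by smooth compactly supported functions
in L²(U) and in the Gagliardo form. -/
def memHs0 (N : ℕ) (s : ℝ) (U : Set (Euc N)) (u : Euc N → ℝ) : Prop :=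
  ∃ v : ℕ → Euc N → ℝ, (∀ k, testFun N U (v k)) ∧
    Tendsto (fun k => ∫ x in U, (v k x - u x) ^ 2) atTop (nhds 0) ∧
    Tendsto (fun k => gagliardo N s U (fun x => v k x - u x)) atTop (nhds 0)

/-- A radial function on ℝ^N. -/
def IsRadial (N : ℕ) (u : Euc N → ℝ) : Prop :=
  ∀ x y : Euc N, ‖x‖ = ‖y‖ → u x = u y

/-- The open unit ball of ℝ^N. -/
def unitBall (N : ℕ) : Set (Euc N) := Metric.ball 0 1

/-- The radial critical Sobolev constant S_{N,s,rad}(B,h) on the unit ball. -/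
def sobolevConstRad (N : ℕ) (s : ℝ) (h : Euc N → ℝ) : ℝ :=
  sInf { r | ∃ u, testFun N (unitBall N) u ∧ IsRadial N u ∧ ¬ (∀ x, u x = 0) ∧
    r = (gagliardo N s (unitBall N) u + ∫ x in unitBall N, h x * (u x) ^ 2) /
        (lpNormOn N (critExp N s) (unitBall N) u) ^ 2 }

/-- Membership in H^s_{0,rad}(B): radial, approximated by radial test functions. -/
def memHs0rad (N : ℕ) (s : ℝ) (u : Euc N → ℝ) : Prop :=
  IsRadial N u ∧ ∃ v : ℕ → Euc N → ℝ,
    (∀ k, testFun N (unitBall N) (v k) ∧ IsRadial N (v k)) ∧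
    Tendsto (fun k => ∫ x in unitBall N, (v k x - u x) ^ 2) atTop (nhds 0) ∧
    Tendsto (fun k => gagliardo N s (unitBall N) (fun x => v k x - u x)) atTop (nhds 0)

/-- The fractional Laplacian of a test function. -/
def fracLap (N : ℕ) (s : ℝ) (φ : Euc N → ℝ) (x : Euc N) : ℝ :=
  (cNs N s / 2) * ∫ z : Euc N, (2 * φ x - φ (x + z) - φ (x - z)) / ‖z‖ ^ ((N : ℝ) + 2 * s)

lemma aux_integrable (N : ℕ) (hN : 2 ≤ N) (D a : ℝ) (ha : -(N : ℝ) < a) :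
    Integrable (fun z : Euc N => (Set.Iio D).indicator (fun t : ℝ => t ^ a) ‖z‖) := by
  haveI : Nontrivial (Euc N) := by
    haveI : Nonempty (Fin N) := ⟨⟨0, by omega⟩⟩
    infer_instance
  rw [integrable_fun_norm_addHaar (volume : Measure (Euc N)) (f := (Set.Iio D).indicator (fun t : ℝ => t ^ a))]
  have h1 : IntegrableOn (fun y : ℝ => y ^ ((N : ℝ) - 1 + a)) (Set.Ioo 0 D) := by
    rcases le_or_gt D 0 with hD | hD
    · simp [Set.Ioo_eq_empty (not_lt.mpr hD)]
    · exact (intervalIntegral.integrableOn_Ioo_rpow_iff hD).2 (by linarith)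
  have h2 : IntegrableOn ((Set.Ioo 0 D).indicator (fun y : ℝ => y ^ ((N : ℝ) - 1 + a))) (Set.Ioi 0) :=
    (h1.integrable_indicator measurableSet_Ioo).integrableOn
  refine h2.congr_fun ?_ measurableSet_Ioi
  intro y hy
  have hy' : 0 < y := hy
  by_cases hyD : y < D
  · have e : (y : ℝ) ^ (N - 1) = y ^ ((N : ℝ) - 1) := by
      rw [← Real.rpow_natCast, Nat.cast_sub (by omega)]; simp
    simp [Set.indicator, hy', hyD, e, Real.rpow_add hy']
  · simp [Set.indicator, hyD]

lemma aux_meas (N : ℕ) (s : ℝ) (u : Euc N → ℝ) (hu : Continuous u) :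
    Measurable (fun p : Euc N × Euc N => (u p.1 - u p.2) ^ 2 / ‖p.1 - p.2‖ ^ ((N : ℝ) + 2 * s)) := by
  have := hu.measurable
  fun_prop

lemma aux_gag (N : ℕ) (hN : 2 ≤ N) (Ω : Set (Euc N)) (hΩo : IsOpen Ω)
    (hΩb : Bornology.IsBounded Ω) (s₀ : ℝ) (h0 : 0 < s₀) (h1 : s₀ < 1)
    (u : Euc N → ℝ) (hu : testFun N Ω u) :
    Tendsto (fun s : ℝ => ∫ x in Ω, ∫ y in Ω, (u x - u y) ^ 2 / ‖x - y‖ ^ ((N : ℝ) + 2 * s))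
      (𝓝[>] s₀) (𝓝 (∫ x in Ω, ∫ y in Ω, (u x - u y) ^ 2 / ‖x - y‖ ^ ((N : ℝ) + 2 * s₀))) := by
  obtain ⟨hsm, hcs, hts⟩ := hu
  obtain ⟨L, hL⟩ := (hsm.of_le (m := 1) (by exact_mod_cast le_top)).lipschitzWith_of_hasCompactSupport hcs (by simp)
  obtain ⟨D, hD0, hD⟩ : ∃ D : ℝ, 1 ≤ D ∧ ∀ x ∈ Ω, ∀ y ∈ Ω, ‖x - y‖ < D := by
    obtain ⟨C, hC⟩ := Metric.isBounded_iff.1 hΩb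
    refine ⟨max 1 (C + 1), le_max_left _ _, fun x hx y hy => ?_⟩
    have := hC hx hy
    rw [dist_eq_norm] at this
    exact lt_of_lt_of_le (by linarith) (le_max_right _ _)
  have hfin : volume Ω < ⊤ := hΩb.measure_lt_top
  haveI : IsFiniteMeasure (volume.restrict Ω) := ⟨by simpa using hfin⟩
  set s1 := (1 + s₀) / 2 with hs1
  set a : ℝ := 2 - N - 2 * s1 with ha
  set g : Euc N → ℝ := fun z => (Set.Iio D).indicator (fun t : ℝ => t ^ a) ‖z‖ with hg
  have hgi : Integrable g := aux_integrable N hN D a (by rw [ha]; linarith)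
  have hN' : (2 : ℝ) ≤ N := by exact_mod_cast hN
  have hg0 : ∀ z, 0 ≤ g z := by
    intro z
    simp only [hg, Set.indicator]
    split_ifs <;> positivity
  set K : ℝ := L ^ 2 * D ^ 2 with hK
  have hK0 : 0 ≤ K := by positivity
  have key : ∀ s ∈ Set.Ioo s₀ s1, ∀ x ∈ Ω, ∀ y ∈ Ω,
      ‖(u x - u y) ^ 2 / ‖x - y‖ ^ ((N : ℝ) + 2 * s)‖ ≤ K * g (x - y) := by
    intro s hs x hx y hy
    have hd := hD x hx y hy
    have hgv : g (x - y) = ‖x - y‖ ^ a := by simp [hg, Set.indicator, hd]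
    rw [hgv]
    rcases eq_or_ne x y with rfl | hxy
    · simp; positivity
    have hpos : 0 < ‖x - y‖ := norm_pos_iff.2 (sub_ne_zero.2 hxy)
    rw [Real.norm_of_nonneg (by positivity), div_le_iff₀ (by positivity), mul_assoc,
      ← Real.rpow_add hpos]
    have e : a + (N + 2 * s) = 2 + -(2 * (s1 - s)) := by rw [ha]; ring
    rw [e, Real.rpow_add hpos, Real.rpow_neg hpos.le]
    have hl : |u x - u y| ≤ L * ‖x - y‖ := by
      have := hL.dist_le_mul x y
      rwa [Real.dist_eq, dist_eq_norm] at this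
    have hl2 : (u x - u y) ^ 2 ≤ L ^ 2 * ‖x - y‖ ^ 2 := by
      rw [← sq_abs, ← mul_pow]; gcongr
    have hp : ‖x - y‖ ^ (2 * (s1 - s)) ≤ D ^ 2 := by
      calc ‖x - y‖ ^ (2 * (s1 - s)) ≤ D ^ (2 * (s1 - s)) :=
            Real.rpow_le_rpow hpos.le hd.le (by linarith [hs.2])
        _ ≤ D ^ (2 : ℝ) := Real.rpow_le_rpow_of_exponent_le hD0 (by linarith [hs.1])
        _ = D ^ 2 := by norm_cast
    have hq : 1 ≤ D ^ 2 * (‖x - y‖ ^ (2 * (s1 - s)))⁻¹ := by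
      rw [← div_eq_mul_inv, le_div_iff₀ (by positivity)]; linarith
    have h2 : ‖x - y‖ ^ (2 : ℝ) = ‖x - y‖ ^ 2 := by norm_cast
    rw [h2, hK]
    calc (u x - u y) ^ 2 ≤ L ^ 2 * ‖x - y‖ ^ 2 := hl2
      _ ≤ L ^ 2 * ‖x - y‖ ^ 2 * (D ^ 2 * (‖x - y‖ ^ (2 * (s1 - s)))⁻¹) :=
          le_mul_of_one_le_right (by positivity) hq
      _ = _ := by ring
  have hev : ∀ᶠ s in 𝓝[>] s₀, s ∈ Set.Ioo s₀ s1 := Ioo_mem_nhdsGT (by linarith)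
  have hgx : ∀ x, Integrable (fun y => K * g (x - y)) :=
    fun x => (hgi.comp_sub_left x).const_mul K
  have hB : ∀ x, ∫ y in Ω, K * g (x - y) ≤ K * ∫ z, g z := by
    intro x
    calc ∫ y in Ω, K * g (x - y) ≤ ∫ y, K * g (x - y) :=
          setIntegral_le_integral (hgx x) (Eventually.of_forall fun y => mul_nonneg hK0 (hg0 _))
      _ = K * ∫ z, g z := by rw [integral_const_mul, integral_sub_left_eq_self]
  refine tendsto_integral_filter_of_dominated_convergence (fun _ => K * ∫ z, g z) ?_ ?_ ?_ ?_
  · refine Eventually.of_forall fun s => ?_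
    exact ((aux_meas N s u hsm.continuous).stronglyMeasurable.integral_prod_right
      (ν := volume.restrict Ω)).aestronglyMeasurable
  · filter_upwards [hev] with s hs
    refine (ae_restrict_iff' hΩo.measurableSet).2 (Eventually.of_forall fun x hx => ?_)
    refine (norm_integral_le_of_norm_le (hgx x).integrableOn ?_).trans (hB x)
    exact (ae_restrict_iff' hΩo.measurableSet).2 (Eventually.of_forall fun y hy => key s hs x hx y hy)
  · exact integrable_const _
  · refine (ae_restrict_iff' hΩo.measurableSet).2 (Eventually.of_forall fun x hx => ?_)
    refine tendsto_integral_filter_of_dominated_convergence (fun y => K * g (x - y)) ?_ ?_ ?_ ?_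
    · refine Eventually.of_forall fun s => ?_
      exact ((aux_meas N s u hsm.continuous).comp measurable_prodMk_left).aestronglyMeasurable
    · filter_upwards [hev] with s hs
      exact (ae_restrict_iff' hΩo.measurableSet).2
        (Eventually.of_forall fun y hy => key s hs x hx y hy)
    · exact (hgx x).integrableOn
    · refine Eventually.of_forall fun y => ?_
      rcases eq_or_ne x y with rfl | hxy
      · simp
      have hpos : 0 < ‖x - y‖ := norm_pos_iff.2 (sub_ne_zero.2 hxy)
      refine Tendsto.mono_left ?_ nhdsWithin_le_nhds
      refine Tendsto.div tendsto_const_nhds ?_ (by positivity)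
      have : Continuous fun s : ℝ => ‖x - y‖ ^ ((N : ℝ) + 2 * s) :=
        Continuous.rpow continuous_const (by fun_prop) (fun _ => Or.inl hpos.ne')
      exact this.tendsto s₀

lemma aux_c (N : ℕ) (s₀ : ℝ) (h0 : 0 < s₀) (h1 : s₀ < 1) : ContinuousAt (cNs N) s₀ := by
  have hG : ∀ t : ℝ, 0 < t → ContinuousAt Real.Gamma t := fun t ht =>
    (Real.differentiableAt_Gamma (fun m => by
      have : (0 : ℝ) ≤ m := m.cast_nonneg
      linarith)).continuousAt
  unfold cNs
  have hg1 : ContinuousAt (fun s : ℝ => Real.Gamma (((N : ℝ) + 2 * s) / 2)) s₀ :=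
    ContinuousAt.comp' (hG _ (by positivity)) (by fun_prop)
  have hg2 : ContinuousAt (fun s : ℝ => Real.Gamma (1 - s)) s₀ :=
    ContinuousAt.comp' (hG _ (by linarith)) (by fun_prop)
  have h4 : ContinuousAt (fun s : ℝ => (4 : ℝ) ^ s) s₀ :=
    Real.continuousAt_const_rpow (by norm_num)
  refine ContinuousAt.div ((continuousAt_id.mul h4).mul hg1) (continuousAt_const.mul hg2) ?_
  have := Real.Gamma_pos_of_pos (s := 1 - s₀) (by linarith)
  positivity

lemma aux_critpos (N : ℕ) (hN : 2 ≤ N) (s : ℝ) (h1 : s < 1) : 0 < critExp N s := by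
  have hN' : (2 : ℝ) ≤ N := by exact_mod_cast hN
  exact div_pos (by linarith) (by linarith)

lemma aux_crit (N : ℕ) (hN : 2 ≤ N) (s₀ : ℝ) (h1 : s₀ < 1) : ContinuousAt (critExp N) s₀ := by
  have hN' : (2 : ℝ) ≤ N := by exact_mod_cast hN
  unfold critExp
  refine ContinuousAt.div (by fun_prop) (by fun_prop) (by linarith)

lemma aux_lpint_pos (N : ℕ) (Ω : Set (Euc N)) (p : ℝ) (hp : 0 < p)
    (u : Euc N → ℝ) (hu : testFun N Ω u) (hne : ¬ ∀ x, u x = 0) :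
    0 < ∫ x in Ω, |u x| ^ p := by
  obtain ⟨hsm, hcs, hts⟩ := hu
  rw [setIntegral_eq_integral_of_forall_compl_eq_zero]
  · push Not at hne
    obtain ⟨x, hx⟩ := hne
    refine Continuous.integral_pos_of_hasCompactSupport_nonneg_nonzero (x := x) ?_ ?_ ?_ ?_
    · exact (hsm.continuous.abs).rpow_const (fun _ => Or.inr hp.le)
    · exact hcs.comp_left (g := fun t : ℝ => |t| ^ p) (by simp [hp.ne'])
    · intro x; positivity
    · positivity
  · intro x hx
    have : u x = 0 := image_eq_zero_of_notMem_tsupport (fun h => hx (hts h))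
    simp [this, hp.ne']

lemma aux_lp (N : ℕ) (hN : 2 ≤ N) (Ω : Set (Euc N))
    (hΩb : Bornology.IsBounded Ω) (s₀ : ℝ) (h1 : s₀ < 1)
    (u : Euc N → ℝ) (hu : testFun N Ω u) (hne : ¬ ∀ x, u x = 0) :
    Tendsto (fun s : ℝ => lpNormOn N (critExp N s) Ω u) (𝓝[>] s₀)
      (𝓝 (lpNormOn N (critExp N s₀) Ω u)) := by
  have hp0 := aux_critpos N hN s₀ h1
  have hpos := aux_lpint_pos N Ω _ hp0 u hu hne
  obtain ⟨hsm, hcs, hts⟩ := hu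
  have hfin : volume Ω < ⊤ := hΩb.measure_lt_top
  haveI : IsFiniteMeasure (volume.restrict Ω) := ⟨by simpa using hfin⟩
  have hc : Tendsto (critExp N) (𝓝[>] s₀) (𝓝 (critExp N s₀)) :=
    (aux_crit N hN s₀ h1).tendsto.mono_left nhdsWithin_le_nhds
  obtain ⟨M, hM⟩ := hcs.exists_bound_of_continuous hsm.continuous
  have hM0 : 0 ≤ M := (norm_nonneg _).trans (hM 0)
  unfold lpNormOn
  refine Tendsto.rpow ?_ (tendsto_const_nhds.div hc hp0.ne') (Or.inl hpos.ne')
  have hev : ∀ᶠ s in 𝓝[>] s₀, critExp N s ∈ Set.Ioo 0 (critExp N s₀ + 1) :=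
    hc (Ioo_mem_nhds hp0 (by linarith))
  refine tendsto_integral_filter_of_dominated_convergence
    (fun _ => (1 + M) ^ (critExp N s₀ + 1)) ?_ ?_ (integrable_const _) ?_
  · filter_upwards [hev] with s hs
    exact ((hsm.continuous.abs).rpow_const (fun _ => Or.inr hs.1.le)).aestronglyMeasurable
  · filter_upwards [hev] with s hs
    refine Eventually.of_forall fun x => ?_
    rw [Real.norm_of_nonneg (by positivity)]
    have := hM x
    rw [Real.norm_eq_abs] at this
    calc |u x| ^ critExp N s ≤ (1 + M) ^ critExp N s :=
          Real.rpow_le_rpow (abs_nonneg _) (by linarith) hs.1.le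
      _ ≤ _ := Real.rpow_le_rpow_of_exponent_le (by linarith) hs.2.le
  · refine Eventually.of_forall fun x => ?_
    exact tendsto_const_nhds.rpow hc (Or.inr hp0)

lemma aux_nonneg (N : ℕ) (s : ℝ) (h0 : 0 < s) (h1 : s < 1) (Ω : Set (Euc N)) (u : Euc N → ℝ) :
    0 ≤ gagliardo N s Ω u / (lpNormOn N (critExp N s) Ω u) ^ 2 := by
  have hg2 := Real.Gamma_pos_of_pos (s := 1 - s) (by linarith)
  have hg1 := Real.Gamma_pos_of_pos (s := ((N : ℝ) + 2 * s) / 2) (by positivity)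
  have hc : 0 ≤ cNs N s := by unfold cNs; positivity
  refine div_nonneg (mul_nonneg (by positivity) ?_) (sq_nonneg _)
  exact integral_nonneg fun x => integral_nonneg fun y => by positivity

/-- limsup_{s ↘ s₀} S_{N,s}(Ω) ≤ S_{N,s₀}(Ω) for s₀ ∈ [1/2,1). -/
theorem statement2 (N : ℕ) (hN : 2 ≤ N) (Ω : Set (Euc N)) (hΩo : IsOpen Ω)
    (hΩb : Bornology.IsBounded Ω) (hΩL : IsLipschitzSet N Ω)
    (s₀ : ℝ) (hs₀ : s₀ ∈ Set.Ico (1/2 : ℝ) 1) :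
    Filter.limsup (fun s : ℝ => sobolevConst N s Ω) (𝓝[>] s₀) ≤ sobolevConst N s₀ Ω := by
  obtain ⟨h12, h1⟩ := hs₀
  have h0 : 0 < s₀ := by linarith
  have hev : ∀ᶠ s in 𝓝[>] s₀, s ∈ Set.Ioo s₀ 1 := Ioo_mem_nhdsGT h1
  rcases Set.eq_empty_or_nonempty Ω with rfl | ⟨x₀, hx₀⟩
  · have hz : ∀ s, sobolevConst N s (∅ : Set (Euc N)) = 0 := by
      intro s
      unfold sobolevConst
      convert Real.sInf_empty
      refine Set.eq_empty_of_forall_notMem ?_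
      rintro r ⟨u, hu, hne, -⟩
      refine hne fun x => ?_
      exact image_eq_zero_of_notMem_tsupport (fun h => hu.2.2 h)
    simp [hz]
  · have hcob : IsCoboundedUnder (· ≤ ·) (𝓝[>] s₀) (fun s : ℝ => sobolevConst N s Ω) := by
      refine IsBoundedUnder.isCoboundedUnder_le ⟨0, ?_⟩
      rw [eventually_map]
      filter_upwards [hev] with s hs
      refine Real.sInf_nonneg ?_
      rintro r ⟨u, -, -, rfl⟩
      exact aux_nonneg N s (h0.trans hs.1) hs.2 Ω u
    refine le_csInf ?_ ?_
    · obtain ⟨f, hf1, hf2, hf3, -, hf5⟩ :=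
        exists_contDiff_tsupport_subset (n := (⊤ : ℕ∞)) (hΩo.mem_nhds hx₀)
      exact ⟨_, f, ⟨hf3, hf2, hf1⟩, fun h => by simp [h x₀] at hf5, rfl⟩
    · rintro r ⟨u, hu, hne, rfl⟩
      have hpos : 0 < lpNormOn N (critExp N s₀) Ω u :=
        Real.rpow_pos_of_pos (aux_lpint_pos N Ω _ (aux_critpos N hN s₀ h1) u hu hne) _
      have hlim : Tendsto (fun s => gagliardo N s Ω u / (lpNormOn N (critExp N s) Ω u) ^ 2)
          (𝓝[>] s₀) (𝓝 (gagliardo N s₀ Ω u / (lpNormOn N (critExp N s₀) Ω u) ^ 2)) := by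
        refine Tendsto.div ?_ ((aux_lp N hN Ω hΩb s₀ h1 u hu hne).pow 2) (by positivity)
        exact ((((aux_c N s₀ h0 h1).tendsto.mono_left nhdsWithin_le_nhds).div_const 2)).mul
          (aux_gag N hN Ω hΩo hΩb s₀ h0 h1 u hu)
      rw [← hlim.limsup_eq]
      refine limsup_le_limsup ?_ hcob hlim.isBoundedUnder_le
      filter_upwards [hev] with s hs
      refine csInf_le ⟨0, ?_⟩ ⟨u, hu, hne, rfl⟩
      rintro r ⟨v, -, -, rfl⟩
      exact aux_nonneg N s (h0.trans hs.1) hs.2 Ω v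
end
end

section
/- For each integer k ≥ 2 define χ_k : (0,∞) → ℝ by χ_k(t) = 0 for t ≤ 1/k², χ_k(t) = log(k²t)/log k for 1/k² ≤ t ≤ 1/k, and χ_k(t) = 1 for t ≥ 1/k. Then χ_k → 1 in H^{1/2}((0,∞)) as k → ∞; that is, ∫₀^∞ (χ_k(t) − 1)² dt → 0 and ∫₀^∞ ∫₀^∞ (χ_k(x) − χ_k(y))²/(x − y)² dx dy → 0 as k → ∞. -/
open MeasureTheory Real Filter Topology Set

noncomputable section

/-- Integrable majorant of `(log s)² / (s-1)²`. -/
def hMaj (s : ℝ) : ℝ := if s ≤ 1 then 16 * s ^ (-(1/2) : ℝ) else 16 * s ^ (-(3/2) : ℝ)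

lemma hMaj_nonneg (s : ℝ) (hs : 0 < s) : 0 ≤ hMaj s := by
  unfold hMaj; split_ifs <;> positivity

lemma hMaj_integrable : IntegrableOn hMaj (Ioi 0) := by
  rw [← Ioc_union_Ioi_eq_Ioi (zero_le_one : (0:ℝ) ≤ 1)]
  refine IntegrableOn.union ?_ ?_
  · have h : IntegrableOn (fun s : ℝ => 16 * s ^ (-(1/2) : ℝ)) (Ioc 0 1) := by
      have := (intervalIntegral.intervalIntegrable_rpow' (a := 0) (b := 1)
        (r := (-(1/2) : ℝ)) (by norm_num)).const_mul 16
      rwa [intervalIntegrable_iff_integrableOn_Ioc_of_le zero_le_one] at this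
    refine h.congr_fun (fun s hs => ?_) measurableSet_Ioc
    simp [hMaj, hs.2]
  · have h : IntegrableOn (fun s : ℝ => 16 * s ^ (-(3/2) : ℝ)) (Ioi 1) :=
      (integrableOn_Ioi_rpow_of_lt (by norm_num) one_pos).const_mul 16
    refine h.congr_fun (fun s hs => ?_) measurableSet_Ioi
    have : ¬ s ≤ 1 := not_le.2 hs
    simp [hMaj, this]

lemma log_sq_le (s : ℝ) (hs : 0 < s) : (Real.log s) ^ 2 ≤ (s - 1) ^ 2 * hMaj s := by
  obtain ⟨u, hu, rfl⟩ : ∃ u : ℝ, 0 < u ∧ u ^ 4 = s :=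
    ⟨s ^ ((1:ℝ)/4), by positivity, by
      rw [← Real.rpow_natCast, ← Real.rpow_mul hs.le]; norm_num⟩
  have hlog : Real.log (u ^ 4) = 4 * Real.log u := by rw [Real.log_pow]; norm_num
  rw [hlog]
  unfold hMaj
  split_ifs with h
  · have hu1 : u ≤ 1 := by
      by_contra hc
      exact absurd h (not_le.2 (one_lt_pow₀ (not_le.1 hc) (by norm_num)))
    have e : (u ^ 4) ^ (-(1/2) : ℝ) = (u ^ 2)⁻¹ := by
      rw [← Real.rpow_natCast u 4, ← Real.rpow_mul hu.le, ← Real.rpow_natCast u 2,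
        ← Real.rpow_neg hu.le]; norm_num
    rw [e]
    have h1 : Real.log u ≤ 0 := Real.log_nonpos hu.le hu1
    have h2 : 1 - u⁻¹ ≤ Real.log u := Real.one_sub_inv_le_log_of_pos hu
    have h3 : (Real.log u) ^ 2 ≤ (u⁻¹ - 1) ^ 2 := by
      apply sq_le_sq'  <;> linarith
    have h4 : (1 - u) ^ 2 ≤ (u ^ 4 - 1) ^ 2 := by
      have : u ^ 4 ≤ u := by simpa using pow_le_pow_of_le_one hu.le hu1 (show 1 ≤ 4 by norm_num)
      nlinarith
    have h5 : (u⁻¹ - 1) ^ 2 = (1 - u) ^ 2 * (u ^ 2)⁻¹ := by field_simp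
    have h6 := mul_le_mul_of_nonneg_right h4 (show 0 ≤ (u ^ 2)⁻¹ by positivity)
    nlinarith
  · have hu1 : 1 ≤ u := by
      by_contra hc
      exact h (pow_le_one₀ hu.le (not_le.1 hc).le)
    have e : (u ^ 4) ^ (-(3/2) : ℝ) = (u ^ 6)⁻¹ := by
      rw [← Real.rpow_natCast u 4, ← Real.rpow_mul hu.le, ← Real.rpow_natCast u 6,
        ← Real.rpow_neg hu.le]; norm_num
    rw [e]
    have h1 : 0 ≤ Real.log u := Real.log_nonneg hu1
    have h2 : Real.log u ≤ u - 1 := Real.log_le_sub_one_of_pos hu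
    have h3 : (Real.log u) ^ 2 ≤ (u - 1) ^ 2 := by
      apply sq_le_sq'  <;> linarith
    have h4 : ((u - 1) * u ^ 3) ^ 2 ≤ (u ^ 4 - 1) ^ 2 := by
      have h7 : 1 ≤ u ^ 3 := one_le_pow₀ hu1
      apply sq_le_sq'
      · nlinarith [mul_nonneg (sub_nonneg.2 hu1) (pow_nonneg hu.le 3), one_le_pow₀ hu1 (n := 4)]
      · nlinarith
    have h5 : (u - 1) ^ 2 = ((u - 1) * u ^ 3) ^ 2 * (u ^ 6)⁻¹ := by field_simp
    have h6 := mul_le_mul_of_nonneg_right h4 (show 0 ≤ (u ^ 6)⁻¹ by positivity)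
    nlinarith

/-- weight -/
def wMaj (b x : ℝ) : ℝ := if x ≤ b then 1 else (b / x) ^ 2

lemma pointwise_bound (f : ℝ → ℝ) (a b L : ℝ) (ha : 0 < a) (hab : a < b) (hL : 0 < L)
    (hf : ∀ t, 0 < t → f t = (Real.log (max a (min t b)) - Real.log a) / L)
    (x y : ℝ) (hx : 0 < x) (hy : 0 < y) :
    (f x - f y) ^ 2 / (x - y) ^ 2 ≤
      wMaj b x / ((max a (min x b)) ^ 2 * L ^ 2) * hMaj (y / max a (min x b)) := by
  have hb : 0 < b := ha.trans hab
  set c := max a (min x b) with hc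
  have hca : a ≤ c := le_max_left _ _
  have hcb : c ≤ b := max_le hab.le (min_le_right _ _)
  have hc0 : 0 < c := ha.trans_le hca
  have hh : 0 ≤ hMaj (y / c) := hMaj_nonneg _ (by positivity)
  have hw : 0 ≤ wMaj b x := by unfold wMaj; split_ifs <;> positivity
  by_cases hne : f x = f y
  · rw [hne]; simp; positivity
  have hxy : x ≠ y := fun h => hne (by rw [h])
  have hpos : 0 < (x - y) ^ 2 := by
    have := sub_ne_zero.2 hxy; positivity
  rw [div_le_iff₀ hpos]
  -- step 1
  have s1 : (f x - f y) ^ 2 * L ^ 2 ≤ (Real.log (y / c)) ^ 2 := by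
    rw [hf x hx, hf y hy, ← hc, Real.log_div hy.ne' hc0.ne']
    have : ((Real.log c - Real.log a) / L - (Real.log (max a (min y b)) - Real.log a) / L) ^ 2
        * L ^ 2 = (Real.log (max a (min y b)) - Real.log c) ^ 2 := by
      field_simp; ring
    rw [this]
    rcases le_total y a with h | h
    · have e : max a (min y b) = a := max_eq_left ((min_le_left _ _).trans h)
      rw [e]
      have := Real.log_le_log hy h
      have := Real.log_le_log ha hca
      nlinarith
    · rcases le_total y b with h' | h'
      · rw [min_eq_left h', max_eq_right h]
      · rw [min_eq_right h', max_eq_right hab.le]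
        have := Real.log_le_log hb h'
        have := Real.log_le_log hc0 hcb
        nlinarith
  have s2 := log_sq_le (y / c) (by positivity)
  have s3 : (y - c) ^ 2 ≤ wMaj b x * (x - y) ^ 2 := by
    unfold wMaj
    split_ifs with hxb
    · rcases le_total a x with hax | hax
      · have : c = x := by rw [hc, min_eq_left hxb, max_eq_right hax]
        rw [this]; nlinarith
      · have hce : c = a := by rw [hc, min_eq_left hxb, max_eq_left hax]
        have hya : a < y := by
          by_contra hcon
          push Not at hcon
          apply hne
          rw [hf x hx, hf y hy, ← hc, hce, max_eq_left ((min_le_left _ _).trans hcon)]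
        rw [hce]; nlinarith
    · push Not at hxb
      have hce : c = b := by rw [hc, min_eq_right hxb.le, max_eq_right hab.le]
      have hyb : y < b := by
        by_contra hcon
        push Not at hcon
        apply hne
        rw [hf x hx, hf y hy, ← hc, hce, min_eq_right hcon, max_eq_right hab.le]
      rw [hce, ← mul_pow]
      have : b - y ≤ b / x * (x - y) := by
        rw [div_mul_eq_mul_div, le_div_iff₀ hx]; nlinarith
      nlinarith
  have s4 : (y / c - 1) ^ 2 = (y - c) ^ 2 / c ^ 2 := by field_simp
  rw [s4] at s2
  have s5 : (f x - f y) ^ 2 * L ^ 2 ≤ wMaj b x * (x - y) ^ 2 / c ^ 2 * hMaj (y / c) := by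
    refine s1.trans (s2.trans ?_)
    gcongr
  calc (f x - f y) ^ 2 = (f x - f y) ^ 2 * L ^ 2 / L ^ 2 := by field_simp
    _ ≤ wMaj b x * (x - y) ^ 2 / c ^ 2 * hMaj (y / c) / L ^ 2 := by gcongr
    _ = _ := by field_simp

lemma inner_bound (f : ℝ → ℝ) (a b L : ℝ) (ha : 0 < a) (hab : a < b) (hL : 0 < L)
    (hf : ∀ t, 0 < t → f t = (Real.log (max a (min t b)) - Real.log a) / L)
    (x : ℝ) (hx : 0 < x) :
    ∫ y in Ioi (0:ℝ), (f x - f y) ^ 2 / (x - y) ^ 2 ≤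
      (∫ s in Ioi (0:ℝ), hMaj s) / L ^ 2 * (wMaj b x / max a (min x b)) := by
  have hc0 : 0 < max a (min x b) := ha.trans_le (le_max_left _ _)
  have hp := pointwise_bound f a b L ha hab hL hf x
  set c := max a (min x b)
  have hint : IntegrableOn (fun y => hMaj (y / c)) (Ioi 0) := by
    have := (integrableOn_Ioi_comp_mul_right_iff hMaj 0 (inv_pos.2 hc0)).2
      (by simpa using hMaj_integrable)
    simpa [div_eq_mul_inv] using this
  have hval : ∫ y in Ioi (0:ℝ), hMaj (y / c) = c * ∫ s in Ioi (0:ℝ), hMaj s := by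
    have := integral_comp_mul_right_Ioi hMaj 0 (inv_pos.2 hc0)
    simpa [div_eq_mul_inv] using this
  calc _ ≤ ∫ y in Ioi (0:ℝ), wMaj b x / (c ^ 2 * L ^ 2) * hMaj (y / c) := by
        refine integral_mono_of_nonneg (Eventually.of_forall fun y => by positivity)
          (hint.const_mul _) ?_
        filter_upwards [ae_restrict_mem measurableSet_Ioi] with y hy
        exact hp y hx hy
    _ = _ := by
        rw [integral_const_mul, hval]; field_simp

lemma outer_bound (a b : ℝ) (ha : 0 < a) (hab : a < b) :
    IntegrableOn (fun x => wMaj b x / max a (min x b)) (Ioi 0) ∧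
    ∫ x in Ioi (0:ℝ), wMaj b x / max a (min x b) = 2 + Real.log (b / a) := by
  have hb : 0 < b := ha.trans hab
  have e1 : EqOn (fun x => wMaj b x / max a (min x b)) (fun _ => 1 / a) (Ioc 0 a) := by
    intro x hx
    have : x ≤ b := hx.2.trans hab.le
    simp [wMaj, this, hx.2]
  have e2 : EqOn (fun x => wMaj b x / max a (min x b)) (fun x => x⁻¹) (Ioc a b) := by
    intro x hx
    simp [wMaj, hx.2, hx.1.le]
  have e3 : EqOn (fun x => wMaj b x / max a (min x b)) (fun x => b * x ^ (-2 : ℝ)) (Ioi b) := by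
    intro x hx
    have hx' : b < x := hx
    have hx0 : 0 < x := hb.trans hx'
    have e : x ^ (-2 : ℝ) = (x ^ 2)⁻¹ := by
      rw [Real.rpow_neg hx0.le]; norm_num
    simp only [wMaj, not_le.2 hx', if_false, min_eq_right hx'.le, max_eq_right hab.le, e]
    field_simp
  have i1 : IntegrableOn (fun x => wMaj b x / max a (min x b)) (Ioc 0 a) :=
    IntegrableOn.congr_fun (by simp) e1.symm measurableSet_Ioc
  have hi : IntervalIntegrable (fun x : ℝ => x⁻¹) volume a b := by
    apply intervalIntegral.intervalIntegrable_inv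
    · intro x hx
      rw [uIcc_of_le hab.le] at hx
      exact (ha.trans_le hx.1).ne'
    · exact continuousOn_id
  have i2 : IntegrableOn (fun x => wMaj b x / max a (min x b)) (Ioc a b) :=
    IntegrableOn.congr_fun ((intervalIntegrable_iff_integrableOn_Ioc_of_le hab.le).1 hi)
      e2.symm measurableSet_Ioc
  have i3 : IntegrableOn (fun x => wMaj b x / max a (min x b)) (Ioi b) :=
    IntegrableOn.congr_fun ((integrableOn_Ioi_rpow_of_lt (by norm_num) hb).const_mul b)
      e3.symm measurableSet_Ioi
  have u2 : Ioi a = Ioc a b ∪ Ioi b := (Ioc_union_Ioi_eq_Ioi hab.le).symm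
  have u1 : Ioi 0 = Ioc 0 a ∪ Ioi a := (Ioc_union_Ioi_eq_Ioi ha.le).symm
  have i23 : IntegrableOn (fun x => wMaj b x / max a (min x b)) (Ioi a) := by
    rw [u2]; exact i2.union i3
  refine ⟨by rw [u1]; exact i1.union i23, ?_⟩
  rw [u1, setIntegral_union (Ioc_disjoint_Ioi le_rfl) measurableSet_Ioi i1 i23, u2,
    setIntegral_union (Ioc_disjoint_Ioi le_rfl) measurableSet_Ioi i2 i3,
    setIntegral_congr_fun measurableSet_Ioc e1, setIntegral_congr_fun measurableSet_Ioc e2,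
    setIntegral_congr_fun measurableSet_Ioi e3, ← intervalIntegral.integral_of_le hab.le,
    integral_inv_of_pos ha hb, integral_const_mul, integral_Ioi_rpow_of_lt (by norm_num) hb]
  have e : b ^ (-2 + 1 : ℝ) = b⁻¹ := by
    rw [show (-2 + 1 : ℝ) = -1 by norm_num, Real.rpow_neg_one]
  rw [e]
  simp [ha.le]
  field_simp
  ring

lemma full_bound (f : ℝ → ℝ) (a b L : ℝ) (ha : 0 < a) (hab : a < b) (hL : 0 < L)
    (hf : ∀ t, 0 < t → f t = (Real.log (max a (min t b)) - Real.log a) / L) :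
    ∫ x in Ioi (0:ℝ), ∫ y in Ioi (0:ℝ), (f x - f y) ^ 2 / (x - y) ^ 2 ≤
      (∫ s in Ioi (0:ℝ), hMaj s) / L ^ 2 * (2 + Real.log (b / a)) := by
  obtain ⟨hi, hv⟩ := outer_bound a b ha hab
  rw [← hv, ← integral_const_mul]
  refine integral_mono_of_nonneg
    (Eventually.of_forall fun x => integral_nonneg fun y => by positivity) (hi.const_mul _) ?_
  filter_upwards [ae_restrict_mem measurableSet_Ioi] with x hx
  exact inner_bound f a b L ha hab hL hf x hx

/-- the logarithmic cut-off functions χ_k converge to 1 in H^{1/2}((0,∞)). -/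
theorem statement6 (χ : ℕ → ℝ → ℝ)
    (h0 : ∀ k : ℕ, 2 ≤ k → ∀ t : ℝ, 0 < t → t ≤ 1 / (k : ℝ) ^ 2 → χ k t = 0)
    (h1 : ∀ k : ℕ, 2 ≤ k → ∀ t : ℝ, 1 / (k : ℝ) ^ 2 ≤ t → t ≤ 1 / (k : ℝ) →
      χ k t = Real.log ((k : ℝ) ^ 2 * t) / Real.log (k : ℝ))
    (h2 : ∀ k : ℕ, 2 ≤ k → ∀ t : ℝ, 1 / (k : ℝ) ≤ t → χ k t = 1) :
    Tendsto (fun k => ∫ t in Set.Ioi (0 : ℝ), (χ k t - 1) ^ 2) atTop (𝓝 0) ∧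
    Tendsto (fun k => ∫ x in Set.Ioi (0 : ℝ), ∫ y in Set.Ioi (0 : ℝ),
      (χ k x - χ k y) ^ 2 / (x - y) ^ 2) atTop (𝓝 0) := by
  have key : ∀ k : ℕ, 2 ≤ k → 0 < 1 / (k:ℝ) ^ 2 ∧ 1 / (k:ℝ) ^ 2 < 1 / (k:ℝ) ∧
      0 < Real.log k ∧ Real.log ((1 / (k:ℝ)) / (1 / (k:ℝ) ^ 2)) = Real.log k ∧
      ∀ t, 0 < t → χ k t =
        (Real.log (max (1 / (k:ℝ) ^ 2) (min t (1 / (k:ℝ)))) - Real.log (1 / (k:ℝ) ^ 2))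
          / Real.log k := by
    intro k hk
    have hk1 : (1:ℝ) < k := by exact_mod_cast hk
    have hk0 : (0:ℝ) < k := by linarith
    have hlt : 1 / (k:ℝ) ^ 2 < 1 / (k:ℝ) := by
      apply one_div_lt_one_div_of_lt hk0; nlinarith
    have hl := Real.log_pos hk1
    refine ⟨by positivity, hlt, hl, ?_, ?_⟩
    · congr 1; field_simp
    · intro t ht
      rcases le_total t (1 / (k:ℝ) ^ 2) with h | h
      · rw [h0 k hk t ht h, max_eq_left ((min_le_left _ _).trans h)]; simp
      · have hlk : Real.log (1 / (k:ℝ) ^ 2) = - (2 * Real.log k) := by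
          rw [one_div, Real.log_inv, Real.log_pow]; norm_num
        rcases le_total t (1 / (k:ℝ)) with h' | h'
        · rw [h1 k hk t h h', min_eq_left h', max_eq_right h, hlk,
            Real.log_mul (by positivity) ht.ne', Real.log_pow]
          push_cast; ring
        · rw [h2 k hk t h', min_eq_right h', max_eq_right hlt.le, hlk, one_div, Real.log_inv]
          field_simp; ring
  constructor
  · refine squeeze_zero' (g := fun k : ℕ => 1 / (k:ℝ))
      (Eventually.of_forall fun k => integral_nonneg fun t => by positivity) ?_
      tendsto_one_div_atTop_nhds_zero_nat
    filter_upwards [eventually_ge_atTop 2] with k hk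
    obtain ⟨ha, hab, hl, -, hf⟩ := key k hk
    have hb := ha.trans hab
    have hi : Integrable ((Ioc (0:ℝ) (1 / (k:ℝ))).indicator fun _ => (1:ℝ))
        (volume.restrict (Ioi 0)) := by
      rw [integrable_indicator_iff measurableSet_Ioc]
      refine IntegrableOn.mono_measure (ν := volume) ?_ Measure.restrict_le_self
      exact integrableOn_const (by simp) (by simp)
    calc _ ≤ ∫ t in Ioi (0:ℝ), (Ioc (0:ℝ) (1 / (k:ℝ))).indicator (fun _ => (1:ℝ)) t := by
          refine integral_mono_of_nonneg (Eventually.of_forall fun y => by positivity) hi ?_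
          filter_upwards [ae_restrict_mem measurableSet_Ioi] with t ht
          have ht0 : (0:ℝ) < t := ht
          by_cases htb : t ≤ 1 / (k:ℝ)
          · rw [indicator_of_mem (show t ∈ Ioc (0:ℝ) (1 / (k:ℝ)) from ⟨ht0, htb⟩)]
            have hge : 0 ≤ χ k t := by
              rw [hf t ht0]
              exact div_nonneg (sub_nonneg.2 (Real.log_le_log ha (le_max_left _ _))) hl.le
            have hle : χ k t ≤ 1 := by
              rw [← h2 k hk _ le_rfl, hf t ht0, hf _ hb]
              gcongr
            show (χ k t - 1) ^ 2 ≤ 1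
            nlinarith
          · rw [h2 k hk t (not_le.1 htb).le]
            simp only [sub_self, ne_eq, OfNat.ofNat_ne_zero, not_false_eq_true, zero_pow]
            exact indicator_nonneg (fun _ _ => zero_le_one) t
      _ = 1 / (k:ℝ) := by
          rw [setIntegral_indicator measurableSet_Ioc,
            inter_eq_right.2 (fun t ht => ht.1)]
          simp
  · have hlim : Tendsto (fun k : ℕ => (∫ s in Ioi (0:ℝ), hMaj s) *
        (2 * ((Real.log k)⁻¹) ^ 2 + (Real.log k)⁻¹)) atTop (𝓝 0) := by
      have : Tendsto (fun k : ℕ => (Real.log k)⁻¹) atTop (𝓝 0) :=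
        (Real.tendsto_log_atTop.comp tendsto_natCast_atTop_atTop).inv_tendsto_atTop
      simpa using (((this.pow 2).const_mul 2).add this).const_mul (∫ s in Ioi (0:ℝ), hMaj s)
    refine squeeze_zero'
      (Eventually.of_forall fun k => integral_nonneg fun x => integral_nonneg fun y => by positivity)
      ?_ hlim
    filter_upwards [eventually_ge_atTop 2] with k hk
    obtain ⟨ha, hab, hl, hlog, hf⟩ := key k hk
    refine (full_bound (χ k) _ _ _ ha hab hl hf).trans (le_of_eq ?_)
    rw [hlog]
    field_simp
end
end

section
/- Let N ≥ 2 be an integer and s ∈ (1/2, 1). Then there exists a constant C = C(N, s) > 0 such that for every radial function u ∈ C_c^∞(B): Q_{N,s,B}(u) ≥ S_{N,s}(ℝ^N)·‖u‖²_{L^{2*_s}(B)} − C·‖u‖²_{L²(B)}, where B is the open unit ball of ℝ^N. -/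
open MeasureTheory Real Filter Topology Set

noncomputable section

open scoped ENNReal

/-- The Gagliardo integrand. -/
def kk (N : ℕ) (s : ℝ) (u : Euc N → ℝ) (x y : Euc N) : ℝ :=
  (u x - u y) ^ 2 / ‖x - y‖ ^ ((N : ℝ) + 2 * s)

/-- The extended-valued Gagliardo energy. -/
def EE (N : ℕ) (s : ℝ) (U : Set (Euc N)) (u : Euc N → ℝ) : ℝ≥0∞ :=
  ∫⁻ x in U, ∫⁻ y in U, ENNReal.ofReal (kk N s u x y)

lemma kk_nonneg (N : ℕ) (s : ℝ) (u : Euc N → ℝ) (x y : Euc N) : 0 ≤ kk N s u x y := by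
  unfold kk; positivity

lemma kk_meas (N : ℕ) (s : ℝ) (u : Euc N → ℝ) (hu : Measurable u) :
    Measurable (fun p : Euc N × Euc N => kk N s u p.1 p.2) := by
  unfold kk; fun_prop

lemma kk_meas' (N : ℕ) (s : ℝ) (u : Euc N → ℝ) (hu : Measurable u) (x : Euc N) :
    Measurable (fun y : Euc N => kk N s u x y) := by
  unfold kk; fun_prop

lemma gagliardo_eq (N : ℕ) (s : ℝ) (U : Set (Euc N)) (u : Euc N → ℝ) (hu : Measurable u)
    (hE : EE N s U u ≠ ∞) :
    gagliardo N s U u = cNs N s / 2 * (EE N s U u).toReal := by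
  unfold gagliardo
  congr 1
  have h1 : ∀ x, ∫ y in U, (u x - u y) ^ 2 / ‖x - y‖ ^ ((N : ℝ) + 2 * s)
      = (∫⁻ y in U, ENNReal.ofReal (kk N s u x y)).toReal := by
    intro x
    rw [← integral_eq_lintegral_of_nonneg_ae]
    · rfl
    · exact Eventually.of_forall (fun y => kk_nonneg N s u x y)
    · exact (kk_meas' N s u hu x).aestronglyMeasurable
  simp_rw [h1]
  have hm : Measurable (fun x => ∫⁻ y in U, ENNReal.ofReal (kk N s u x y)) := by
    exact Measurable.lintegral_prod_right' (ν := volume.restrict U)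
      (f := fun p : Euc N × Euc N => ENNReal.ofReal (kk N s u p.1 p.2)) (kk_meas N s u hu).ennreal_ofReal
  rw [integral_toReal hm.aemeasurable]
  · rfl
  · exact ae_lt_top hm hE

lemma cNs_pos (N : ℕ) (s : ℝ) (hs : s ∈ Set.Ioo (1/2 : ℝ) 1) : 0 < cNs N s := by
  obtain ⟨h1, h2⟩ := hs
  unfold cNs
  have : 0 < Real.Gamma (((N : ℝ) + 2 * s) / 2) := Real.Gamma_pos_of_pos (by positivity)
  have : 0 < Real.Gamma (1 - s) := Real.Gamma_pos_of_pos (by linarith)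
  have : 0 < s := by linarith
  positivity

/-- near-diagonal kernel bound -/
lemma kernel_near (N : ℕ) (hN : 2 ≤ N) (s : ℝ) (hs : s ∈ Set.Ioo (1/2 : ℝ) 1) :
    ∃ C : ℝ, 0 ≤ C ∧ ∀ x ∈ unitBall N,
      ∫⁻ y in unitBall N, ENNReal.ofReal (‖x - y‖ ^ 2 / ‖x - y‖ ^ ((N : ℝ) + 2 * s))
        ≤ ENNReal.ofReal C := by
  obtain ⟨h1, h2⟩ := hs
  have : Nontrivial (Euc N) := by
    have : Nonempty (Fin N) := ⟨⟨0, by omega⟩⟩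
    infer_instance
  have hIntble : IntegrableOn (fun z : Euc N => ‖z‖ ^ 2 / ‖z‖ ^ ((N : ℝ) + 2 * s)) (Metric.ball 0 2) := by
    rw [integrableOn_fun_norm_addHaar (μ := volume) (f := fun t : ℝ => t ^ 2 / t ^ ((N : ℝ) + 2 * s))]
    have : IntegrableOn (fun t : ℝ => t ^ (1 - 2 * s)) (Ioo 0 2) := by
      rw [intervalIntegral.integrableOn_Ioo_rpow_iff (by norm_num)]
      linarith
    refine this.congr_fun ?_ measurableSet_Ioo
    intro t ht
    have ht0 : 0 < t := ht.1
    simp only [finrank_euclideanSpace, Fintype.card_fin, smul_eq_mul]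
    rw [← Real.rpow_natCast, ← Real.rpow_natCast, ← Real.rpow_sub ht0, ← Real.rpow_add ht0]
    congr 1
    rw [Nat.cast_sub (by omega)]
    push_cast; ring
  refine ⟨∫ z in Metric.ball (0 : Euc N) 2, ‖z‖ ^ 2 / ‖z‖ ^ ((N : ℝ) + 2 * s),
    integral_nonneg (fun z => by positivity), ?_⟩
  intro x hx
  rw [ofReal_integral_eq_lintegral_ofReal hIntble (Eventually.of_forall (fun z => by positivity))]
  have hx' : ‖x‖ < 1 := by simpa [unitBall] using hx
  rw [← lintegral_indicator measurableSet_ball, unitBall, ← lintegral_indicator measurableSet_ball]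
  rw [← lintegral_sub_left_eq_self ((Metric.ball (0 : Euc N) 2).indicator _) x]
  apply lintegral_mono
  intro y
  simp only [indicator]
  split_ifs with ha hb
  · exact le_rfl
  · exfalso; apply hb
    simp at ha ⊢
    linarith [norm_sub_le x y]
  · simp
  · simp

/-- far kernel bound -/
lemma kernel_far (N : ℕ) (s : ℝ) (hs : s ∈ Set.Ioo (1/2 : ℝ) 1) :
    ∃ C : ℝ, 0 ≤ C ∧ ∀ x : Euc N, ‖x‖ ≤ 1 / 2 →
      ∫⁻ y in (unitBall N)ᶜ, ENNReal.ofReal (1 / ‖x - y‖ ^ ((N : ℝ) + 2 * s))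
        ≤ ENNReal.ofReal C := by
  obtain ⟨h1, h2⟩ := hs
  have hIntble : Integrable (fun z : Euc N => 3 ^ ((N : ℝ) + 2 * s) * (1 + ‖z‖) ^ (-((N : ℝ) + 2 * s))) := by
    apply Integrable.const_mul
    apply integrable_one_add_norm
    simp; linarith
  refine ⟨∫ z : Euc N, 3 ^ ((N : ℝ) + 2 * s) * (1 + ‖z‖) ^ (-((N : ℝ) + 2 * s)),
    integral_nonneg (fun z => by positivity), ?_⟩
  intro x hx
  rw [ofReal_integral_eq_lintegral_ofReal hIntble (Eventually.of_forall (fun z => by positivity))]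
  rw [← lintegral_sub_left_eq_self (fun z : Euc N =>
    ENNReal.ofReal (3 ^ ((N : ℝ) + 2 * s) * (1 + ‖z‖) ^ (-((N : ℝ) + 2 * s)))) x]
  rw [unitBall, ← lintegral_indicator measurableSet_ball.compl]
  apply lintegral_mono
  intro y
  simp only [indicator]
  split_ifs with ha
  · apply ENNReal.ofReal_le_ofReal
    simp at ha
    have hxy : 1 / 2 ≤ ‖x - y‖ := by
      have := norm_sub_norm_le y x
      rw [norm_sub_rev] at this; linarith
    rw [Real.rpow_neg (by positivity), ← one_div, ← div_eq_mul_one_div]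
    have hxy' : 0 < ‖x - y‖ := by linarith
    rw [div_le_div_iff₀ (by positivity) (by positivity), one_mul,
      ← Real.mul_rpow (by positivity) (by positivity)]
    apply Real.rpow_le_rpow (by positivity) (by linarith) (by positivity)
  · simp

lemma EE_inner_meas (N : ℕ) (s : ℝ) (U : Set (Euc N)) (u : Euc N → ℝ) (hu : Measurable u) :
    Measurable (fun x => ∫⁻ y in U, ENNReal.ofReal (kk N s u x y)) :=
  Measurable.lintegral_prod_right' (ν := volume.restrict U)
      (f := fun p : Euc N × Euc N => ENNReal.ofReal (kk N s u p.1 p.2)) (kk_meas N s u hu).ennreal_ofReal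

lemma measurableSet_unitBall (N : ℕ) : MeasurableSet (unitBall N) := measurableSet_ball

lemma EE_lip_ne_top (N : ℕ) (hN : 2 ≤ N) (s : ℝ) (hs : s ∈ Set.Ioo (1/2 : ℝ) 1)
    (u : Euc N → ℝ) (L : ℝ) (hL : ∀ x y, |u x - u y| ≤ L * ‖x - y‖) :
    EE N s (unitBall N) u ≠ ∞ := by
  obtain ⟨C, hC0, hC⟩ := kernel_near N hN s hs
  have : EE N s (unitBall N) u ≤ ∫⁻ x in unitBall N, ENNReal.ofReal (L ^ 2) * ENNReal.ofReal C := by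
    unfold EE
    apply setLIntegral_mono' (measurableSet_unitBall N)
    intro x hx
    calc ∫⁻ y in unitBall N, ENNReal.ofReal (kk N s u x y)
        ≤ ∫⁻ y in unitBall N, ENNReal.ofReal (L ^ 2) *
          ENNReal.ofReal (‖x - y‖ ^ 2 / ‖x - y‖ ^ ((N : ℝ) + 2 * s)) := by
          apply lintegral_mono
          intro y
          simp only
          rw [← ENNReal.ofReal_mul (by positivity)]
          apply ENNReal.ofReal_le_ofReal
          unfold kk
          rw [← mul_div_assoc]
          apply div_le_div_of_nonneg_right _ (by positivity)
          rw [← mul_pow, ← sq_abs]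
          exact pow_le_pow_left₀ (abs_nonneg _) (hL x y) 2
      _ = ENNReal.ofReal (L ^ 2) * ∫⁻ y in unitBall N,
          ENNReal.ofReal (‖x - y‖ ^ 2 / ‖x - y‖ ^ ((N : ℝ) + 2 * s)) :=
          lintegral_const_mul' _ _ ENNReal.ofReal_ne_top
      _ ≤ _ := by gcongr; exact hC x hx
  refine ne_top_of_le_ne_top ?_ this
  rw [setLIntegral_const]
  exact ENNReal.mul_ne_top (ENNReal.mul_ne_top ENNReal.ofReal_ne_top ENNReal.ofReal_ne_top)
    measure_ball_lt_top.ne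

lemma kk_symm (N : ℕ) (s : ℝ) (u : Euc N → ℝ) (x y : Euc N) : kk N s u x y = kk N s u y x := by
  unfold kk
  rw [norm_sub_rev]; congr 1; ring

lemma EE_univ_le (N : ℕ) (s : ℝ) (hs : s ∈ Set.Ioo (1/2 : ℝ) 1) :
    ∃ C : ℝ, 0 ≤ C ∧ ∀ v : Euc N → ℝ, Measurable v → (∀ x, 1 / 2 < ‖x‖ → v x = 0) →
      EE N s univ v ≤ EE N s (unitBall N) v +
        ENNReal.ofReal C * ∫⁻ x in unitBall N, ENNReal.ofReal (v x ^ 2) := by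
  obtain ⟨C, hC0, hC⟩ := kernel_far N s hs
  refine ⟨2 * C, by positivity, ?_⟩
  intro v hv h0
  have hB := measurableSet_unitBall N
  have hcomp : ∀ y ∈ (unitBall N)ᶜ, v y = 0 := by
    intro y hy
    apply h0
    simp [unitBall] at hy
    linarith
  have key : ∫⁻ x in unitBall N, ∫⁻ y in (unitBall N)ᶜ, ENNReal.ofReal (kk N s v x y)
      ≤ ENNReal.ofReal C * ∫⁻ x in unitBall N, ENNReal.ofReal (v x ^ 2) := by
    rw [← lintegral_const_mul' _ _ ENNReal.ofReal_ne_top]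
    apply lintegral_mono
    intro x
    simp only
    by_cases hx : 1 / 2 < ‖x‖
    · have : ∫⁻ y in (unitBall N)ᶜ, ENNReal.ofReal (kk N s v x y) = 0 := by
        rw [setLIntegral_eq_zero_iff hB.compl (kk_meas' N s v hv x).ennreal_ofReal]
        filter_upwards with y hy
        simp [kk, hcomp y hy, h0 x hx]
      rw [this]; exact zero_le
    · have : ∫⁻ y in (unitBall N)ᶜ, ENNReal.ofReal (kk N s v x y) =
          ∫⁻ y in (unitBall N)ᶜ, ENNReal.ofReal (v x ^ 2) *
            ENNReal.ofReal (1 / ‖x - y‖ ^ ((N : ℝ) + 2 * s)) := by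
        apply setLIntegral_congr_fun hB.compl
        intro y hy
        simp only
        rw [← ENNReal.ofReal_mul (by positivity)]
        simp [kk, hcomp y hy, div_eq_mul_inv]
      rw [this, lintegral_const_mul' _ _ ENNReal.ofReal_ne_top, mul_comm]
      gcongr
      exact hC x (not_lt.mp hx)
  have key2 : ∫⁻ x in (unitBall N)ᶜ, ∫⁻ y in unitBall N, ENNReal.ofReal (kk N s v x y)
      = ∫⁻ x in unitBall N, ∫⁻ y in (unitBall N)ᶜ, ENNReal.ofReal (kk N s v x y) := by
    rw [lintegral_lintegral_swap]
    · simp_rw [kk_symm N s v]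
    · exact (kk_meas N s v hv).ennreal_ofReal.aemeasurable
  have key3 : ∫⁻ x in (unitBall N)ᶜ, ∫⁻ y in (unitBall N)ᶜ, ENNReal.ofReal (kk N s v x y) = 0 := by
    rw [setLIntegral_eq_zero_iff hB.compl (EE_inner_meas N s _ v hv)]
    filter_upwards with x hx
    rw [setLIntegral_eq_zero_iff hB.compl (kk_meas' N s v hv x).ennreal_ofReal]
    filter_upwards with y hy
    simp [kk, hcomp y hy, hcomp x hx]
  have split : EE N s univ v =
      ∫⁻ x, ((∫⁻ y in unitBall N, ENNReal.ofReal (kk N s v x y)) +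
        ∫⁻ y in (unitBall N)ᶜ, ENNReal.ofReal (kk N s v x y)) := by
    unfold EE
    simp only [Measure.restrict_univ]
    congr 1; ext x
    rw [lintegral_add_compl _ hB]
  rw [split, lintegral_add_left (EE_inner_meas N s _ v hv), ← lintegral_add_compl _ hB,
    ← lintegral_add_compl (fun x => ∫⁻ y in (unitBall N)ᶜ, ENNReal.ofReal (kk N s v x y)) hB,
    key2, key3, add_zero, add_assoc]
  unfold EE
  gcongr
  rw [ENNReal.ofReal_mul (by norm_num), mul_assoc]
  calc _ ≤ _ := add_le_add key key
    _ = _ := by rw [← two_mul]; simp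

lemma IMS (N : ℕ) (hN : 2 ≤ N) (s : ℝ) (hs : s ∈ Set.Ioo (1/2 : ℝ) 1) (θ : Euc N → ℝ) (L : ℝ)
    (hθm : Measurable θ) (hL : ∀ x y, |θ x - θ y| ≤ L * ‖x - y‖) :
    ∃ C : ℝ, 0 ≤ C ∧ ∀ u : Euc N → ℝ, Measurable u →
      EE N s (unitBall N) (fun x => Real.cos (θ x) * u x) +
      EE N s (unitBall N) (fun x => Real.sin (θ x) * u x) ≤ EE N s (unitBall N) u +
        ENNReal.ofReal C * ∫⁻ x in unitBall N, ENNReal.ofReal (u x ^ 2) := by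
  obtain ⟨C, hC0, hC⟩ := kernel_near N hN s hs
  refine ⟨L ^ 2 * C, by positivity, ?_⟩
  intro u hu
  have hB := measurableSet_unitBall N
  set w : Euc N → Euc N → ℝ := fun x y => ‖x - y‖ ^ 2 / ‖x - y‖ ^ ((N : ℝ) + 2 * s) with hw
  have hw0 : ∀ x y, 0 ≤ w x y := fun x y => by simp only [hw]; positivity
  have hws : ∀ x y, w x y = w y x := fun x y => by simp only [hw, norm_sub_rev]
  have hwm : Measurable (fun p : Euc N × Euc N => w p.1 p.2) := by simp only [hw]; fun_prop
  have hwm' : ∀ x, Measurable (fun y : Euc N => w x y) := by intro x; simp only [hw]; fun_prop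
  have hpt : ∀ x y, ENNReal.ofReal (kk N s (fun x => Real.cos (θ x) * u x) x y) +
      ENNReal.ofReal (kk N s (fun x => Real.sin (θ x) * u x) x y) ≤
      ENNReal.ofReal (kk N s u x y) + (ENNReal.ofReal (L ^ 2 / 2 * u x ^ 2) * ENNReal.ofReal (w x y) +
        ENNReal.ofReal (L ^ 2 / 2 * u y ^ 2) * ENNReal.ofReal (w x y)) := by
    intro x y
    have h1 := hw0 x y
    have h2 := kk_nonneg N s u x y
    rw [← ENNReal.ofReal_add (kk_nonneg _ _ _ _ _) (kk_nonneg _ _ _ _ _),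
      ← ENNReal.ofReal_mul (by positivity), ← ENNReal.ofReal_mul (by positivity),
      ← ENNReal.ofReal_add (by positivity) (by positivity),
      ← ENNReal.ofReal_add (by positivity) (by positivity)]
    apply ENNReal.ofReal_le_ofReal
    simp only [kk, hw]
    rw [← mul_div_assoc, ← mul_div_assoc, ← add_div, ← add_div, ← add_div]
    apply div_le_div_of_nonneg_right _ (by positivity)
    have e1 : (Real.cos (θ x) * u x - Real.cos (θ y) * u y) ^ 2 +
        (Real.sin (θ x) * u x - Real.sin (θ y) * u y) ^ 2 =
        (u x - u y) ^ 2 + u x * u y * (2 - 2 * Real.cos (θ x - θ y)) := by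
      rw [Real.cos_sub]
      linear_combination (u x) ^ 2 * Real.sin_sq_add_cos_sq (θ x) + (u y) ^ 2 * Real.sin_sq_add_cos_sq (θ y)
    rw [e1]
    have e2 : 2 - 2 * Real.cos (θ x - θ y) ≤ (L * ‖x - y‖) ^ 2 := by
      have := Real.one_sub_sq_div_two_le_cos (x := θ x - θ y)
      have h3 : (θ x - θ y) ^ 2 ≤ (L * ‖x - y‖) ^ 2 := by
        rw [← sq_abs]; exact pow_le_pow_left₀ (abs_nonneg _) (hL x y) 2
      linarith
    have e3 : 0 ≤ 2 - 2 * Real.cos (θ x - θ y) := by linarith [Real.cos_le_one (θ x - θ y)]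
    have e4 : u x * u y ≤ (u x ^ 2 + u y ^ 2) / 2 := by nlinarith [sq_nonneg (u x - u y)]
    have e5 : u x * u y * (2 - 2 * Real.cos (θ x - θ y)) ≤
        (u x ^ 2 + u y ^ 2) / 2 * (L * ‖x - y‖) ^ 2 :=
      (mul_le_mul_of_nonneg_right e4 e3).trans (mul_le_mul_of_nonneg_left e2 (by positivity))
    linarith
  have t1 : ∫⁻ x in unitBall N, ∫⁻ y in unitBall N,
      ENNReal.ofReal (L ^ 2 / 2 * u x ^ 2) * ENNReal.ofReal (w x y) ≤
      ENNReal.ofReal (L ^ 2 / 2 * C) * ∫⁻ x in unitBall N, ENNReal.ofReal (u x ^ 2) := by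
    rw [← lintegral_const_mul' _ _ ENNReal.ofReal_ne_top]
    apply setLIntegral_mono' hB
    intro x hx
    rw [lintegral_const_mul' _ _ ENNReal.ofReal_ne_top]
    calc _ ≤ ENNReal.ofReal (L ^ 2 / 2 * u x ^ 2) * ENNReal.ofReal C := by
          gcongr; exact hC x hx
      _ = _ := by
          rw [← ENNReal.ofReal_mul (by positivity), ← ENNReal.ofReal_mul (by positivity)]
          congr 1; ring
  have t2 : ∫⁻ x in unitBall N, ∫⁻ y in unitBall N,
      ENNReal.ofReal (L ^ 2 / 2 * u y ^ 2) * ENNReal.ofReal (w x y) =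
      ∫⁻ x in unitBall N, ∫⁻ y in unitBall N,
      ENNReal.ofReal (L ^ 2 / 2 * u x ^ 2) * ENNReal.ofReal (w x y) := by
    rw [lintegral_lintegral_swap]
    · simp_rw [hws]
    · apply Measurable.aemeasurable
      simp only [Function.uncurry_def]
      apply Measurable.fun_mul
      · fun_prop
      · exact hwm.ennreal_ofReal
  have mu : ∀ x, Measurable fun y => ENNReal.ofReal (kk N s u x y) :=
    fun x => (kk_meas' N s u hu x).ennreal_ofReal
  have mc : Measurable (fun x => Real.cos (θ x) * u x) := by fun_prop
  have mA : ∀ x, Measurable (fun y => ENNReal.ofReal (L ^ 2 / 2 * u x ^ 2) * ENNReal.ofReal (w x y)) :=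
    fun x => (hwm' x).ennreal_ofReal.const_mul _
  have mAA : Measurable (fun x => ∫⁻ y in unitBall N,
      ENNReal.ofReal (L ^ 2 / 2 * u x ^ 2) * ENNReal.ofReal (w x y)) := by
    apply Measurable.lintegral_prod_right' (ν := volume.restrict (unitBall N))
      (f := fun p : Euc N × Euc N => ENNReal.ofReal (L ^ 2 / 2 * u p.1 ^ 2) * ENNReal.ofReal (w p.1 p.2))
    apply Measurable.fun_mul
    · fun_prop
    · exact hwm.ennreal_ofReal
  calc _ = ∫⁻ x in unitBall N, ∫⁻ y in unitBall N,
        (ENNReal.ofReal (kk N s (fun x => Real.cos (θ x) * u x) x y) +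
          ENNReal.ofReal (kk N s (fun x => Real.sin (θ x) * u x) x y)) := by
        unfold EE
        rw [← lintegral_add_left (EE_inner_meas N s _ _ mc)]
        congr 1; ext x
        rw [← lintegral_add_left (kk_meas' N s _ mc x).ennreal_ofReal]
    _ ≤ ∫⁻ x in unitBall N, ∫⁻ y in unitBall N, (ENNReal.ofReal (kk N s u x y) +
        (ENNReal.ofReal (L ^ 2 / 2 * u x ^ 2) * ENNReal.ofReal (w x y) +
        ENNReal.ofReal (L ^ 2 / 2 * u y ^ 2) * ENNReal.ofReal (w x y))) :=
        lintegral_mono (fun x => lintegral_mono (fun y => hpt x y))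
    _ = EE N s (unitBall N) u + ((∫⁻ x in unitBall N, ∫⁻ y in unitBall N,
        ENNReal.ofReal (L ^ 2 / 2 * u x ^ 2) * ENNReal.ofReal (w x y)) +
        ∫⁻ x in unitBall N, ∫⁻ y in unitBall N,
        ENNReal.ofReal (L ^ 2 / 2 * u y ^ 2) * ENNReal.ofReal (w x y)) := by
        unfold EE
        rw [← lintegral_add_left mAA, ← lintegral_add_left (EE_inner_meas N s _ _ hu)]
        congr 1; ext x
        rw [← lintegral_add_left (mA x), ← lintegral_add_left (mu x)]
    _ ≤ _ := by
        gcongr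
        rw [t2]
        refine (add_le_add t1 t1).trans (le_of_eq ?_)
        rw [← add_mul, ← ENNReal.ofReal_add (by positivity) (by positivity)]
        congr 2; ring

lemma ball_energy_rot (N : ℕ) (s : ℝ) (v : Euc N → ℝ) (hv : Measurable v) (hr : IsRadial N v)
    (p p' : Euc N) (hp : ‖p‖ = ‖p'‖) (δ : ℝ) :
    ∫⁻ y in Metric.ball p δ, ∫⁻ z in Metric.ball p δ, ENNReal.ofReal (kk N s v y z) =
    ∫⁻ y in Metric.ball p' δ, ∫⁻ z in Metric.ball p' δ, ENNReal.ofReal (kk N s v y z) := by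
  set R : Euc N ≃ₗᵢ[ℝ] Euc N := Submodule.reflection (ℝ ∙ (p - p'))ᗮ with hR
  have hRp : R p = p' := Submodule.reflection_sub hp
  have hmp : MeasurePreserving R volume volume := R.measurePreserving
  have hpre : R ⁻¹' (Metric.ball p' δ) = Metric.ball p δ := by
    ext y
    simp only [mem_preimage, Metric.mem_ball]
    rw [← hRp, R.dist_map]
  have hvR : ∀ y, v (R y) = v y := fun y => hr _ _ (R.norm_map y)
  have hk : ∀ y z, kk N s v (R y) (R z) = kk N s v y z := by
    intro y z
    unfold kk
    rw [hvR, hvR, ← map_sub, R.norm_map]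
  rw [← hmp.setLIntegral_comp_preimage (s := Metric.ball p' δ) measurableSet_ball
    (EE_inner_meas N s _ v hv), hpre]
  congr 1; ext y
  rw [← hmp.setLIntegral_comp_preimage (s := Metric.ball p' δ) measurableSet_ball (kk_meas' N s v hv _).ennreal_ofReal, hpre]
  simp_rw [hk]

lemma vol_ball (N : ℕ) (p : Euc N) (δ : ℝ) (hδ : 0 < δ) :
    volume (Metric.ball p δ) = ENNReal.ofReal (δ ^ N) * volume (Metric.ball (0 : Euc N) 1) := by
  rw [Measure.addHaar_ball_of_pos _ _ hδ]
  simp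

lemma shell (N : ℕ) (hN : 2 ≤ N) (s : ℝ) (v : Euc N → ℝ) (hv : Measurable v) (hr : IsRadial N v)
    (p : Euc N) (δ : ℝ) (hδ : 0 < δ) (h1 : δ ≤ ‖p‖) (h2 : 1 / 8 ≤ ‖p‖) (h3 : ‖p‖ + δ ≤ 1) :
    ∫⁻ y in Metric.ball p δ, ∫⁻ z in Metric.ball p δ, ENNReal.ofReal (kk N s v y z) ≤
      ENNReal.ofReal (2 ^ N * 8 ^ N * δ ^ (N - 1)) * EE N s (unitBall N) v := by
  have hne : Nontrivial (Euc N) := by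
    have : Nonempty (Fin N) := ⟨⟨0, by omega⟩⟩
    infer_instance
  set F := ∫⁻ y in Metric.ball p δ, ∫⁻ z in Metric.ball p δ, ENNReal.ofReal (kk N s v y z) with hF
  set ρ := ‖p‖ with hρ
  set ω := volume (Metric.ball (0 : Euc N) 1) with hω
  have hω0 : ω ≠ 0 := (Metric.measure_ball_pos volume _ one_pos).ne'
  have hωt : ω ≠ ∞ := measure_ball_lt_top.ne
  set H : Euc N → ℝ≥0∞ := fun y => ∫⁻ z in unitBall N, ENNReal.ofReal (kk N s v y z) with hH
  have hHm : Measurable H := EE_inner_meas N s _ v hv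
  set T : Set (Euc N × Euc N) := {q | dist q.2 q.1 < 2 * δ} with hT
  have hTm : MeasurableSet T := by
    apply IsOpen.measurableSet
    exact isOpen_lt (by fun_prop) continuous_const
  set G : Euc N → ℝ≥0∞ := fun q => ∫⁻ y in unitBall N, T.indicator 1 (q, y) * H y with hG
  set A : Set (Euc N) := Metric.ball 0 ρ \ Metric.closedBall 0 (ρ - δ) with hA
  have hFG : ∀ q ∈ A, F ≤ G q := by
    intro q hq
    simp only [hA, Set.mem_sdiff, Metric.mem_ball, dist_zero_right, Metric.mem_closedBall, not_le] at hq
    obtain ⟨hq1, hq2⟩ := hq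
    have hq0 : 0 < ‖q‖ := by linarith
    set p' : Euc N := (ρ / ‖q‖) • q with hp'
    have hnp' : ‖p'‖ = ρ := by
      rw [hp', norm_smul, Real.norm_of_nonneg (by positivity)]
      field_simp
    have hd : dist p' q ≤ δ := by
      rw [dist_eq_norm]
      have : p' - q = (ρ / ‖q‖ - 1) • q := by rw [hp', sub_smul, one_smul]
      rw [this, norm_smul, Real.norm_eq_abs, abs_of_nonneg]
      · field_simp; linarith
      · rw [sub_nonneg, le_div_iff₀ hq0]; linarith
    rw [hF, ball_energy_rot N s v hv hr p p' hnp'.symm δ]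
    have hsub : Metric.ball p' δ ⊆ unitBall N := by
      intro y hy
      simp only [unitBall, Metric.mem_ball, dist_zero_right] at hy ⊢
      have : ‖y‖ ≤ ‖p'‖ + dist y p' := by
        rw [dist_eq_norm]; simpa using norm_add_le p' (y - p')
      linarith
    calc _ ≤ ∫⁻ y in Metric.ball p' δ, T.indicator 1 (q, y) * H y := by
          apply setLIntegral_mono' measurableSet_ball
          intro y hy
          have : (q, y) ∈ T := by
            simp only [hT, mem_ofPred_eq]
            have := dist_triangle y p' q
            have h4 : dist y p' < δ := hy
            linarith
          rw [indicator_of_mem this, Pi.one_apply, one_mul]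
          exact lintegral_mono_set hsub
      _ ≤ _ := lintegral_mono_set hsub
  have hvolA : ENNReal.ofReal (δ * ρ ^ (N - 1)) * ω ≤ volume A := by
    have hcov : volume (Metric.ball (0 : Euc N) ρ) ≤ volume A + volume (Metric.closedBall (0 : Euc N) (ρ - δ)) := by
      refine (measure_mono ?_).trans (measure_union_le _ _)
      intro y hy
      by_cases hc : y ∈ Metric.closedBall (0 : Euc N) (ρ - δ)
      · exact Or.inr hc
      · exact Or.inl ⟨hy, hc⟩
    rw [vol_ball N 0 ρ (by linarith), Measure.addHaar_closedBall _ _ (by linarith)] at hcov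
    simp only [finrank_euclideanSpace, Fintype.card_fin] at hcov
    have hnt : ENNReal.ofReal ((ρ - δ) ^ N) * ω ≠ ∞ := ENNReal.mul_ne_top ENNReal.ofReal_ne_top hωt
    refine ENNReal.le_of_add_le_add_right hnt (le_trans ?_ hcov)
    rw [← add_mul, ← ENNReal.ofReal_add (by positivity) (pow_nonneg (by linarith) _)]
    gcongr
    obtain ⟨m, rfl⟩ : ∃ m, N = m + 1 := ⟨N - 1, by omega⟩
    simp only [Nat.add_sub_cancel]
    rw [pow_succ, pow_succ]
    have : (ρ - δ) ^ m ≤ ρ ^ m := pow_le_pow_left₀ (by linarith) (by linarith) _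
    nlinarith
  have hGint : ∫⁻ q, G q = ENNReal.ofReal ((2 * δ) ^ N) * ω * EE N s (unitBall N) v := by
    simp only [hG]
    rw [lintegral_lintegral_swap]
    · unfold EE
      rw [← lintegral_const_mul' _ _ (ENNReal.mul_ne_top ENNReal.ofReal_ne_top hωt)]
      congr 1; ext y
      rw [lintegral_mul_const]
      · congr 1
        rw [← vol_ball N y (2 * δ) (by positivity), ← lintegral_indicator_one measurableSet_ball]
        congr 1; ext q
        simp only [indicator, hT, mem_ofPred_eq, Metric.mem_ball, dist_comm, Pi.one_apply]
      · exact (measurable_one.indicator hTm).comp (by fun_prop)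
    · apply Measurable.aemeasurable
      simp only [Function.uncurry_def]
      apply Measurable.fun_mul
      · exact (measurable_one.indicator hTm)
      · exact hHm.comp measurable_snd
  have hmain : volume A * F ≤ ENNReal.ofReal ((2 * δ) ^ N) * ω * EE N s (unitBall N) v := by
    rw [← hGint, mul_comm, ← setLIntegral_const]
    calc ∫⁻ _ in A, F ≤ ∫⁻ q in A, G q := by
          apply setLIntegral_mono' _ hFG
          exact measurableSet_ball.diff measurableSet_closedBall
      _ ≤ _ := setLIntegral_le_lintegral _ _
  have hρ0 : 0 < ρ := by linarith
  have hle : ENNReal.ofReal (δ * ρ ^ (N - 1)) * ω * F ≤ ENNReal.ofReal (δ * ρ ^ (N - 1)) * ω *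
      (ENNReal.ofReal (2 ^ N * 8 ^ N * δ ^ (N - 1)) * EE N s (unitBall N) v) := by
    refine (mul_le_mul_left hvolA F).trans (hmain.trans ?_)
    rw [← mul_assoc (_ * ω), mul_right_comm (ENNReal.ofReal (δ * ρ ^ (N - 1))) ω, ← ENNReal.ofReal_mul (by positivity)]
    gcongr
    obtain ⟨m, rfl⟩ : ∃ m, N = m + 1 := ⟨N - 1, by omega⟩
    simp only [Nat.add_sub_cancel]
    have : 1 ≤ 8 ^ m * ρ ^ m := by
      rw [← mul_pow]; exact one_le_pow₀ (by linarith)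
    calc (2 * δ) ^ (m + 1) = 2 ^ (m + 1) * δ ^ (m + 1) * 1 := by rw [mul_pow, mul_one]
      _ ≤ 2 ^ (m + 1) * δ ^ (m + 1) * (8 * (8 ^ m * ρ ^ m)) := by gcongr; linarith
      _ = _ := by ring
  rwa [ENNReal.mul_le_mul_iff_right] at hle
  · refine mul_ne_zero ?_ hω0
    simp; positivity
  · exact ENNReal.mul_ne_top ENNReal.ofReal_ne_top hωt

lemma jensen_ball (N : ℕ) (v : Euc N → ℝ) (hv : Continuous v) (p : Euc N) (δ : ℝ) (hδ : 0 < δ) (c : ℝ) :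
    ENNReal.ofReal (((⨍ y in Metric.ball p δ, v y) - c) ^ 2) * volume (Metric.ball p δ) ≤
      ∫⁻ y in Metric.ball p δ, ENNReal.ofReal ((v y - c) ^ 2) := by
  have h0 : volume (Metric.ball p δ) ≠ 0 := (Metric.measure_ball_pos volume _ hδ).ne'
  have ht : volume (Metric.ball p δ) ≠ ∞ := measure_ball_lt_top.ne
  have hIntble : ∀ g : Euc N → ℝ, Continuous g → IntegrableOn g (Metric.ball p δ) := fun g hg =>
    (hg.continuousOn.integrableOn_compact (isCompact_closedBall p δ)).mono_set Metric.ball_subset_closedBall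
  have hconv : ConvexOn ℝ univ (fun t : ℝ => t ^ 2) := Even.convexOn_pow (by decide)
  have hj := hconv.map_set_average_le (f := fun y => v y - c) (t := Metric.ball p δ) (μ := volume)
    (by fun_prop) isClosed_univ h0 ht (by simp) (hIntble _ (by fun_prop)) (hIntble _ (by simp only [Function.comp_def]; fun_prop))
  have hav : ⨍ y in Metric.ball p δ, (v y - c) = (⨍ y in Metric.ball p δ, v y) - c := by
    rw [setAverage_eq, setAverage_eq, integral_sub (hIntble _ hv) (hIntble _ continuous_const)]
    simp only [integral_const, smul_eq_mul, measureReal_restrict_apply_univ]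
    have : volume.real (Metric.ball p δ) ≠ 0 := by
      rw [measureReal_def]; exact (ENNReal.toReal_pos h0 ht).ne'
    field_simp
  rw [hav] at hj
  rw [← ofReal_integral_eq_lintegral_ofReal (hIntble _ (by fun_prop)) (Eventually.of_forall (fun _ => by positivity))]
  rw [← ENNReal.ofReal_toReal ht, ← ENNReal.ofReal_mul (by positivity)]
  apply ENNReal.ofReal_le_ofReal
  rw [setAverage_eq _ (fun y => (v y - c) ^ 2), smul_eq_mul, measureReal_def] at hj
  have hpos := ENNReal.toReal_pos h0 ht
  rw [inv_mul_eq_div, le_div_iff₀ hpos] at hj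
  exact hj

lemma avg_step (N : ℕ) (hN : 2 ≤ N) (s : ℝ) (hs : s ∈ Set.Ioo (1/2 : ℝ) 1) :
    ∃ C : ℝ, 0 ≤ C ∧ ∀ v : Euc N → ℝ, Continuous v → IsRadial N v → EE N s (unitBall N) v ≠ ∞ →
      ∀ (p p' : Euc N) (δ : ℝ), 0 < δ → δ ≤ ‖p‖ → 1 / 8 ≤ ‖p‖ → ‖p‖ + δ ≤ 1 →
      Metric.ball p' (δ / 2) ⊆ Metric.ball p δ →
      ((⨍ y in Metric.ball p' (δ / 2), v y) - (⨍ y in Metric.ball p δ, v y)) ^ 2 ≤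
        C * δ ^ (2 * s - 1) * (EE N s (unitBall N) v).toReal := by
  obtain ⟨hs1, hs2⟩ := hs
  set W := volume (Metric.ball (0 : Euc N) 1) with hW
  have hW0 : W ≠ 0 := (Metric.measure_ball_pos volume _ one_pos).ne'
  have hWt : W ≠ ∞ := measure_ball_lt_top.ne
  set ω : ℝ := W.toReal with hω
  have hωpos : 0 < ω := ENNReal.toReal_pos hW0 hWt
  have hWω : W = ENNReal.ofReal ω := (ENNReal.ofReal_toReal hWt).symm
  refine ⟨2 ^ ((N : ℝ) + 2 * s) * 2 ^ N * (2 ^ N * 8 ^ N) / ω ^ 2, by positivity, ?_⟩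
  intro v hv hr hE p p' δ hδ h1 h2 h3 hsub
  have hvm : Measurable v := hv.measurable
  set a := ⨍ y in Metric.ball p δ, v y with ha
  set a' := ⨍ y in Metric.ball p' (δ / 2), v y with ha'
  have hsh := shell N hN s v hvm hr p δ hδ h1 h2 h3
  have key : ENNReal.ofReal ((a' - a) ^ 2) * volume (Metric.ball p' (δ / 2)) * volume (Metric.ball p δ) ≤
      ENNReal.ofReal ((2 * δ) ^ ((N : ℝ) + 2 * s)) *
       ∫⁻ y in Metric.ball p δ, ∫⁻ z in Metric.ball p δ, ENNReal.ofReal (kk N s v y z) := by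
    calc _ ≤ (∫⁻ y in Metric.ball p' (δ / 2), ENNReal.ofReal ((v y - a) ^ 2)) * volume (Metric.ball p δ) := by
          gcongr
          exact jensen_ball N v hv p' (δ / 2) (by positivity) a
      _ ≤ (∫⁻ y in Metric.ball p δ, ENNReal.ofReal ((v y - a) ^ 2)) * volume (Metric.ball p δ) := by
          gcongr
      _ = ∫⁻ y in Metric.ball p δ, ENNReal.ofReal ((a - v y) ^ 2) * volume (Metric.ball p δ) := by
          rw [lintegral_mul_const' _ _ measure_ball_lt_top.ne]
          congr 2; ext y; congr 1; ring
      _ ≤ ∫⁻ y in Metric.ball p δ, ∫⁻ z in Metric.ball p δ, ENNReal.ofReal ((v z - v y) ^ 2) := by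
          apply lintegral_mono
          intro y
          exact jensen_ball N v hv p δ hδ (v y)
      _ ≤ ∫⁻ y in Metric.ball p δ, ENNReal.ofReal ((2 * δ) ^ ((N : ℝ) + 2 * s)) *
            ∫⁻ z in Metric.ball p δ, ENNReal.ofReal (kk N s v y z) := by
          apply setLIntegral_mono' measurableSet_ball
          intro y hy
          rw [← lintegral_const_mul' _ _ ENNReal.ofReal_ne_top]
          apply setLIntegral_mono' measurableSet_ball
          intro z hz
          rw [← ENNReal.ofReal_mul (by positivity)]
          apply ENNReal.ofReal_le_ofReal
          unfold kk
          by_cases hyz : y = z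
          · simp [hyz]
          have hpos : 0 < ‖y - z‖ := norm_pos_iff.mpr (sub_ne_zero.mpr hyz)
          have hle : ‖y - z‖ ≤ 2 * δ := by
            rw [← dist_eq_norm]
            have := dist_triangle_right y z p
            have h5 : dist y p < δ := hy
            have h6 : dist z p < δ := hz
            linarith
          rw [← mul_div_assoc, le_div_iff₀ (by positivity), mul_comm]
          have e : (v z - v y) ^ 2 = (v y - v z) ^ 2 := by ring
          rw [e]
          gcongr
      _ = _ := lintegral_const_mul' _ _ ENNReal.ofReal_ne_top
  have key2 := key.trans (mul_le_mul_right hsh _)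
  rw [vol_ball N p' (δ / 2) (by positivity), vol_ball N p δ hδ, ← hW, hWω,
    ← ENNReal.ofReal_toReal hE, ← ENNReal.ofReal_mul (by positivity),
    ← ENNReal.ofReal_mul (by positivity), ← ENNReal.ofReal_mul (by positivity),
    ← ENNReal.ofReal_mul (by positivity), ← ENNReal.ofReal_mul (by positivity),
    ← ENNReal.ofReal_mul (by positivity), ENNReal.ofReal_le_ofReal_iff (by positivity)] at key2
  set e := (EE N s (unitBall N) v).toReal with he
  have hδs : δ ^ ((N : ℝ) + 2 * s) * δ ^ (N - 1) = δ ^ (2 * s - 1) * (δ ^ N * δ ^ N) := by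
    rw [← Real.rpow_natCast δ (N - 1), ← Real.rpow_natCast δ N, ← Real.rpow_add hδ, ← Real.rpow_add hδ,
      ← Real.rpow_add hδ]
    congr 1
    rw [Nat.cast_sub (by omega)]; push_cast; ring
  rw [Real.mul_rpow (by norm_num) hδ.le] at key2
  have key3 : (a' - a) ^ 2 * (ω ^ 2 * (δ ^ N * δ ^ N)) ≤
     (2 ^ ((N : ℝ) + 2 * s) * 2 ^ N * (2 ^ N * 8 ^ N)) * δ ^ (2 * s - 1) * e * (δ ^ N * δ ^ N) := by
    have hd : (δ / 2) ^ N * 2 ^ N = δ ^ N := by rw [← mul_pow]; congr 1; ring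
    calc (a' - a) ^ 2 * (ω ^ 2 * (δ ^ N * δ ^ N))
        = ((a' - a) ^ 2 * ((δ / 2) ^ N * ω) * (δ ^ N * ω)) * 2 ^ N := by
          rw [← hd]; ring
      _ ≤ (2 ^ ((N : ℝ) + 2 * s) * δ ^ ((N : ℝ) + 2 * s) * (2 ^ N * 8 ^ N * δ ^ (N - 1) * e)) * 2 ^ N := by
          gcongr
      _ = (2 ^ ((N : ℝ) + 2 * s) * 2 ^ N * (2 ^ N * 8 ^ N)) * e * (δ ^ ((N : ℝ) + 2 * s) * δ ^ (N - 1)) := by ring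
      _ = _ := by rw [hδs]; ring
  have hdd : 0 < δ ^ N * δ ^ N := by positivity
  rw [← mul_assoc] at key3
  have key4 := le_of_mul_le_mul_right key3 hdd
  rw [div_mul_eq_mul_div, div_mul_eq_mul_div, le_div_iff₀ (by positivity)]
  exact key4

lemma morrey (N : ℕ) (hN : 2 ≤ N) (s : ℝ) (hs : s ∈ Set.Ioo (1/2 : ℝ) 1) :
    ∃ C : ℝ, 0 ≤ C ∧ ∀ δ : ℝ, 0 < δ → δ ≤ 1 / 8 → ∃ D : ℝ, 0 ≤ D ∧
      ∀ v : Euc N → ℝ, Continuous v → IsRadial N v → EE N s (unitBall N) v ≠ ∞ →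
      ∀ x : Euc N, 1 / 4 ≤ ‖x‖ → ‖x‖ < 1 →
        v x ^ 2 ≤ C * δ ^ (2 * s - 1) * (EE N s (unitBall N) v).toReal +
          D * ∫ y in unitBall N, v y ^ 2 := by
  obtain ⟨C, hC0, hC⟩ := avg_step N hN s hs
  obtain ⟨hs1, hs2⟩ := hs
  set τ : ℝ := (1 / 2) ^ (s - 1 / 2) with hτ
  have hτ0 : 0 < τ := by positivity
  have hτ1 : τ < 1 := Real.rpow_lt_one (by norm_num) (by norm_num) (by linarith)
  refine ⟨2 * (C / (1 - τ) ^ 2), by positivity, ?_⟩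
  intro δ hδ hδ8
  set W := volume (Metric.ball (0 : Euc N) 1) with hW
  have hW0 : W ≠ 0 := (Metric.measure_ball_pos volume _ one_pos).ne'
  have hWt : W ≠ ∞ := measure_ball_lt_top.ne
  set ω : ℝ := W.toReal with hω
  have hωpos : 0 < ω := ENNReal.toReal_pos hW0 hWt
  have hWω : W = ENNReal.ofReal ω := (ENNReal.ofReal_toReal hWt).symm
  refine ⟨2 * (1 / (δ ^ N * ω)), by positivity, ?_⟩
  intro v hv hr hE x hx1 hx2
  set e := (EE N s (unitBall N) v).toReal with he
  have he0 : 0 ≤ e := ENNReal.toReal_nonneg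
  have hx0 : 0 < ‖x‖ := by linarith
  set d : ℕ → ℝ := fun k => δ * (1 / 2) ^ k with hd
  have hd0 : ∀ k, 0 < d k := fun k => by simp only [hd]; positivity
  have hdδ : ∀ k, d k ≤ δ := fun k => by
    simp only [hd]
    exact mul_le_of_le_one_right hδ.le (pow_le_one₀ (by norm_num) (by norm_num))
  have hdlim : Tendsto d atTop (𝓝 0) := by
    have h := (tendsto_pow_atTop_nhds_zero_of_lt_one (r := (1 / 2 : ℝ)) (by norm_num) (by norm_num)).const_mul δ
    rw [mul_zero] at h
    exact h
  set p : ℕ → Euc N := fun k => (1 - d k / ‖x‖) • x with hp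
  have hdx : ∀ k, d k / ‖x‖ ≤ 1 := fun k => by
    rw [div_le_one hx0]; linarith [hdδ k]
  have hpn : ∀ k, ‖p k‖ = ‖x‖ - d k := fun k => by
    simp only [hp]
    rw [norm_smul, Real.norm_of_nonneg (by linarith [hdx k])]
    field_simp
  have hpx : ∀ k, dist (p k) x = d k := fun k => by
    have : p k - x = (-(d k / ‖x‖)) • x := by simp only [hp]; rw [sub_smul, neg_smul, one_smul]; abel
    rw [dist_eq_norm, this, norm_smul, norm_neg, Real.norm_of_nonneg (div_nonneg (hd0 k).le hx0.le)]
    field_simp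
  have hsucc : ∀ k, d (k + 1) = d k / 2 := fun k => by simp only [hd]; rw [pow_succ]; ring
  have hpp : ∀ k, dist (p (k + 1)) (p k) = d k / 2 := fun k => by
    have : p (k + 1) - p k = (d k / 2 / ‖x‖) • x := by
      simp only [hp]; rw [hsucc, ← sub_smul]; congr 1; ring
    rw [dist_eq_norm, this, norm_smul, Real.norm_of_nonneg (div_nonneg (by linarith [hd0 k]) hx0.le)]
    field_simp
  set a : ℕ → ℝ := fun k => ⨍ y in Metric.ball (p k) (d k), v y with haa
  have hstep : ∀ k, dist (a k) (a (k + 1)) ≤ Real.sqrt (C * δ ^ (2 * s - 1) * e) * τ ^ k := by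
    intro k
    have h := hC v hv hr hE (p k) (p (k + 1)) (d k) (hd0 k) (by rw [hpn]; linarith [hdδ k])
      (by rw [hpn]; linarith [hdδ k]) (by rw [hpn]; linarith)
      (Metric.ball_subset_ball' (by rw [hpp]; linarith))
    rw [dist_comm, Real.dist_eq]
    rw [← hsucc] at h
    apply abs_le_of_sq_le_sq _ (by positivity)
    rw [mul_pow, Real.sq_sqrt (by positivity)]
    refine h.trans (le_of_eq ?_)
    have : d k ^ (2 * s - 1) = δ ^ (2 * s - 1) * (τ ^ k) ^ 2 := by
      simp only [hd]
      rw [Real.mul_rpow hδ.le (by positivity)]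
      congr 1
      rw [hτ, ← Real.rpow_natCast, ← Real.rpow_natCast, ← Real.rpow_natCast, ← Real.rpow_mul (by norm_num),
        ← Real.rpow_mul (by positivity), ← Real.rpow_mul (by positivity)]
      congr 1; push_cast; ring
    rw [this]; ring
  have hlim : Tendsto a atTop (𝓝 (v x)) := by
    rw [Metric.tendsto_atTop]
    intro ε hε
    obtain ⟨η, hη, hηv⟩ := Metric.continuous_iff.mp hv x (ε / 2) (by positivity)
    obtain ⟨K, hK⟩ := (Metric.tendsto_atTop.mp hdlim) (η / 2) (by positivity)
    refine ⟨K, fun k hk => ?_⟩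
    have hdk : d k < η / 2 := by
      have := hK k hk
      rw [Real.dist_eq, sub_zero, abs_of_pos (hd0 k)] at this
      exact this
    have hj := jensen_ball N v hv (p k) (d k) (hd0 k) (v x)
    have hb : ∫⁻ y in Metric.ball (p k) (d k), ENNReal.ofReal ((v y - v x) ^ 2) ≤
        ∫⁻ y in Metric.ball (p k) (d k), ENNReal.ofReal ((ε / 2) ^ 2) := by
      apply setLIntegral_mono' measurableSet_ball
      intro y hy
      apply ENNReal.ofReal_le_ofReal
      have : dist y x < η := by
        have h1 := dist_triangle y (p k) x
        have h2 : dist y (p k) < d k := hy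
        rw [hpx] at h1
        linarith
      have h3 := hηv y this
      rw [Real.dist_eq] at h3
      rw [← sq_abs]
      exact pow_le_pow_left₀ (abs_nonneg _) h3.le 2
    rw [setLIntegral_const] at hb
    have hm0 : volume (Metric.ball (p k) (d k)) ≠ 0 := (Metric.measure_ball_pos volume _ (hd0 k)).ne'
    have h4 := hj.trans hb
    rw [ENNReal.mul_le_mul_iff_left hm0 measure_ball_lt_top.ne,
      ENNReal.ofReal_le_ofReal_iff (by positivity)] at h4
    have h5 := abs_le_of_sq_le_sq h4 (by positivity)
    rw [Real.dist_eq]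
    simp only [haa]
    linarith
  have hchain := dist_le_of_le_geometric_of_tendsto₀ τ _ hτ1 hstep hlim
  have ha0 : a 0 ^ 2 * (δ ^ N * ω) ≤ ∫ y in unitBall N, v y ^ 2 := by
    have hj := jensen_ball N v hv (p 0) (d 0) (hd0 0) 0
    simp only [sub_zero] at hj
    have hd00 : d 0 = δ := by simp [hd]
    have hsub : Metric.ball (p 0) (d 0) ⊆ unitBall N := by
      unfold unitBall
      apply Metric.ball_subset_ball'
      rw [dist_zero_right, hpn]; linarith
    have hj2 := hj.trans (lintegral_mono_set hsub)
    have hIntble : IntegrableOn (fun y => v y ^ 2) (unitBall N) :=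
      ((hv.pow 2).continuousOn.integrableOn_compact (isCompact_closedBall 0 1)).mono_set Metric.ball_subset_closedBall
    rw [← ofReal_integral_eq_lintegral_ofReal hIntble (Eventually.of_forall (fun _ => by positivity)),
      vol_ball N _ _ (hd0 0), ← hW, hWω, ← ENNReal.ofReal_mul (pow_nonneg (hd0 0).le _), ← ENNReal.ofReal_mul (by positivity),
      ENNReal.ofReal_le_ofReal_iff (integral_nonneg (fun _ => by positivity)), hd00] at hj2
    simp only [haa]
    rw [hd00]
    exact hj2
  have hc2 : (a 0 - v x) ^ 2 ≤ C / (1 - τ) ^ 2 * δ ^ (2 * s - 1) * e := by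
    rw [Real.dist_eq] at hchain
    have := pow_le_pow_left₀ (abs_nonneg _) hchain 2
    rw [sq_abs, div_pow, Real.sq_sqrt (by positivity)] at this
    refine this.trans (le_of_eq ?_)
    ring
  have ha1 : a 0 ^ 2 ≤ 1 / (δ ^ N * ω) * ∫ y in unitBall N, v y ^ 2 := by
    rw [one_div, inv_mul_eq_div, le_div_iff₀ (by positivity)]
    exact ha0
  have : v x ^ 2 ≤ 2 * (a 0 - v x) ^ 2 + 2 * a 0 ^ 2 := by nlinarith [sq_nonneg (2 * a 0 - v x)]
  linarith

lemma gagliardo_nonneg (N : ℕ) (s : ℝ) (hs : s ∈ Set.Ioo (1/2 : ℝ) 1) (U : Set (Euc N)) (u : Euc N → ℝ) :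
    0 ≤ gagliardo N s U u := by
  unfold gagliardo
  have := cNs_pos N s hs
  have h2 : 0 ≤ ∫ x in U, ∫ y in U, (u x - u y) ^ 2 / ‖x - y‖ ^ ((N : ℝ) + 2 * s) :=
    integral_nonneg (fun x => integral_nonneg (fun y => by positivity))
  positivity

lemma sobolev_nonneg (N : ℕ) (s : ℝ) (hs : s ∈ Set.Ioo (1/2 : ℝ) 1) (U : Set (Euc N)) :
    0 ≤ sobolevConst N s U := by
  apply Real.sInf_nonneg
  rintro r ⟨u, -, -, rfl⟩
  exact div_nonneg (gagliardo_nonneg N s hs U u) (sq_nonneg _)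

lemma sobolev_le (N : ℕ) (hN : 2 ≤ N) (s : ℝ) (hs : s ∈ Set.Ioo (1/2 : ℝ) 1) (U : Set (Euc N)) (u : Euc N → ℝ)
    (hu : testFun N U u) :
    sobolevConst N s U * (lpNormOn N (critExp N s) U u) ^ 2 ≤ gagliardo N s U u := by
  have hg := gagliardo_nonneg N s hs U u
  by_cases h0 : lpNormOn N (critExp N s) U u = 0
  · simpa [h0] using hg
  have hne : ¬ (∀ x, u x = 0) := by
    intro h
    apply h0
    have hp : 0 < critExp N s := by
      unfold critExp
      have h2N : (2 : ℝ) ≤ N := by exact_mod_cast hN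
      exact div_pos (by linarith) (by linarith [hs.2])
    unfold lpNormOn
    simp [h, Real.zero_rpow hp.ne', Real.zero_rpow (inv_ne_zero hp.ne')]
  rw [← le_div_iff₀ (by positivity)]
  apply csInf_le
  · refine ⟨0, ?_⟩
    rintro r ⟨u, -, -, rfl⟩
    exact div_nonneg (gagliardo_nonneg N s hs U u) (sq_nonneg _)
  · exact ⟨u, hu, hne, rfl⟩

lemma lp_eq (N : ℕ) (p : ℝ) (hp : 0 < p) (f : Euc N → ℝ) (hf : Continuous f) :
    ENNReal.ofReal ((lpNormOn N p (unitBall N) f) ^ 2) =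
      (∫⁻ x in unitBall N, ENNReal.ofReal (f x ^ 2) ^ (p / 2)) ^ (1 / (p / 2)) := by
  have hIntble : IntegrableOn (fun y => |f y| ^ p) (unitBall N) := by
    refine IntegrableOn.mono_set (ContinuousOn.integrableOn_compact (isCompact_closedBall 0 1) ?_)
      Metric.ball_subset_closedBall
    apply Continuous.continuousOn
    exact hf.abs.rpow_const (fun _ => Or.inr hp.le)
  have h0 : 0 ≤ ∫ x in unitBall N, |f x| ^ p := integral_nonneg (fun _ => by positivity)
  have h1 : ∫⁻ x in unitBall N, ENNReal.ofReal (f x ^ 2) ^ (p / 2) =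
      ENNReal.ofReal (∫ x in unitBall N, |f x| ^ p) := by
    rw [ofReal_integral_eq_lintegral_ofReal hIntble (Eventually.of_forall (fun _ => by positivity))]
    congr 1; ext x
    rw [ENNReal.ofReal_rpow_of_nonneg (by positivity) (by positivity), ← sq_abs,
      ← Real.rpow_natCast, ← Real.rpow_mul (abs_nonneg _)]
    congr 2; push_cast; ring
  rw [h1, ENNReal.ofReal_rpow_of_nonneg h0 (by positivity)]
  congr 1
  unfold lpNormOn
  rw [← Real.rpow_natCast, ← Real.rpow_mul h0]
  congr 1; push_cast; field_simp

lemma lp_mink (N : ℕ) (p : ℝ) (hp : 2 ≤ p) (u v w : Euc N → ℝ) (hu : Continuous u)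
    (hv : Continuous v) (hw : Continuous w) (h : ∀ x, u x ^ 2 = v x ^ 2 + w x ^ 2) :
    (lpNormOn N p (unitBall N) u) ^ 2 ≤
      (lpNormOn N p (unitBall N) v) ^ 2 + (lpNormOn N p (unitBall N) w) ^ 2 := by
  rw [← ENNReal.ofReal_le_ofReal_iff (by positivity), ENNReal.ofReal_add (by positivity) (by positivity),
    lp_eq N p (by linarith) u hu, lp_eq N p (by linarith) v hv, lp_eq N p (by linarith) w hw]
  have := ENNReal.lintegral_Lp_add_le (μ := volume.restrict (unitBall N)) (p := p / 2)
    (f := fun x => ENNReal.ofReal (v x ^ 2)) (g := fun x => ENNReal.ofReal (w x ^ 2))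
    (by fun_prop) (by fun_prop) (by linarith)
  refine le_trans (le_of_eq ?_) this
  congr 2; ext x
  rw [h x, ENNReal.ofReal_add (by positivity) (by positivity)]
  rfl

lemma lp_sup (N : ℕ) (p : ℝ) (hp : 2 ≤ p) :
    ∃ W : ℝ, 0 ≤ W ∧ ∀ v : Euc N → ℝ, Continuous v → ∀ M : ℝ, 0 ≤ M →
      (∀ x ∈ unitBall N, v x ^ 2 ≤ M) → (lpNormOn N p (unitBall N) v) ^ 2 ≤ W * M := by
  have hWt : volume (unitBall N) ^ (1 / (p / 2)) ≠ ∞ :=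
    ENNReal.rpow_ne_top_of_nonneg (by positivity) measure_ball_lt_top.ne
  refine ⟨(volume (unitBall N) ^ (1 / (p / 2))).toReal, ENNReal.toReal_nonneg, ?_⟩
  intro v hv M hM h
  rw [← ENNReal.ofReal_le_ofReal_iff (by positivity), lp_eq N p (by linarith) v hv,
    ENNReal.ofReal_mul ENNReal.toReal_nonneg, ENNReal.ofReal_toReal hWt]
  have h1 : ∫⁻ x in unitBall N, ENNReal.ofReal (v x ^ 2) ^ (p / 2) ≤
      ENNReal.ofReal M ^ (p / 2) * volume (unitBall N) := by
    rw [← setLIntegral_const]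
    apply setLIntegral_mono' (measurableSet_unitBall N)
    intro x hx
    apply ENNReal.rpow_le_rpow _ (by positivity)
    exact ENNReal.ofReal_le_ofReal (h x hx)
  refine (ENNReal.rpow_le_rpow h1 (by positivity)).trans (le_of_eq ?_)
  rw [ENNReal.mul_rpow_of_nonneg _ _ (by positivity), ← ENNReal.rpow_mul]
  have : p / 2 * (1 / (p / 2)) = 1 := by field_simp
  rw [this, ENNReal.rpow_one, mul_comm]

lemma exists_theta (N : ℕ) : ∃ (θ : Euc N → ℝ) (L : ℝ), ContDiff ℝ (⊤ : ℕ∞) θ ∧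
    (∀ x y, |θ x - θ y| ≤ L * ‖x - y‖) ∧ (∀ x, ‖x‖ ≤ 1 / 4 → θ x = 0) ∧
    (∀ x, 1 / 2 ≤ ‖x‖ → θ x = π / 2) ∧ IsRadial N θ := by
  set θ : Euc N → ℝ := fun x => π / 2 * Real.smoothTransition ((‖x‖ ^ 2 - 1 / 16) * (16 / 3)) with hθ
  have hsm : ContDiff ℝ (⊤ : ℕ∞) θ := by
    apply ContDiff.mul contDiff_const
    apply Real.smoothTransition.contDiff.comp
    exact ((contDiff_norm_sq ℝ).sub contDiff_const).mul contDiff_const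
  have hone : ∀ x, 1 / 2 ≤ ‖x‖ → θ x = π / 2 := by
    intro x hx
    simp only [hθ]
    rw [Real.smoothTransition.one_of_one_le, mul_one]
    nlinarith
  have hcs : HasCompactSupport (fun x => θ x - π / 2) := by
    apply HasCompactSupport.intro (isCompact_closedBall (0 : Euc N) (1 / 2))
    intro x hx
    simp only [Metric.mem_closedBall, dist_zero_right, not_le] at hx
    rw [hone x hx.le, sub_self]
  obtain ⟨K, hK⟩ := ContDiff.lipschitzWith_of_hasCompactSupport hcs (hsm.sub contDiff_const) (by simp)
  refine ⟨θ, K, hsm, ?_, ?_, hone, ?_⟩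
  · intro x y
    have := hK.dist_le_mul x y
    rw [Real.dist_eq, dist_eq_norm] at this
    simpa using this
  · intro x hx
    simp only [hθ]
    rw [Real.smoothTransition.zero_of_nonpos, mul_zero]
    nlinarith [norm_nonneg x]
  · intro x y hxy
    simp only [hθ, hxy]

/-- Q_{N,s,B}(u) ≥ S_{N,s}(ℝ^N)‖u‖²_{2*_s} − C‖u‖²_{L²} for radial test
functions on the unit ball. -/
theorem statement11 (N : ℕ) (hN : 2 ≤ N) (s : ℝ) (hs : s ∈ Set.Ioo (1/2 : ℝ) 1) :
    ∃ C : ℝ, 0 < C ∧ ∀ u : Euc N → ℝ, testFun N (unitBall N) u → IsRadial N u →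
      gagliardo N s (unitBall N) u ≥
        sobolevConst N s Set.univ * (lpNormOn N (critExp N s) (unitBall N) u) ^ 2 -
          C * ∫ x in unitBall N, (u x) ^ 2 := by
  have h2N : (2 : ℝ) ≤ N := by exact_mod_cast hN
  have hs1 := hs.1
  have hs2 := hs.2
  set q := critExp N s with hq
  have hq2 : 2 ≤ q := by
    rw [hq]; unfold critExp
    rw [le_div_iff₀ (by linarith)]; linarith
  set S := sobolevConst N s Set.univ with hS
  have hS0 : 0 ≤ S := sobolev_nonneg N s hs _
  set c := cNs N s with hc
  have hc0 : 0 < c := cNs_pos N s hs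
  obtain ⟨θ, L, hθs, hθL, hθ0, hθ1, hθr⟩ := exists_theta N
  have hθc : Continuous θ := hθs.continuous
  obtain ⟨C1, hC10, hC1⟩ := IMS N hN s hs θ L hθc.measurable hθL
  obtain ⟨C2, hC20, hC2⟩ := EE_univ_le N s hs
  obtain ⟨W, hW0, hW⟩ := lp_sup N q hq2
  obtain ⟨Cm, hCm0, hCm⟩ := morrey N hN s hs
  set t : ℝ := (c / 2) / (S * W * Cm + 1) with ht
  have ht0 : 0 < t := by positivity
  set δ : ℝ := min (1 / 8) (t ^ (1 / (2 * s - 1))) with hδ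
  have hδ0 : 0 < δ := by rw [hδ]; positivity
  have hδt : δ ^ (2 * s - 1) ≤ t := by
    calc δ ^ (2 * s - 1) ≤ (t ^ (1 / (2 * s - 1))) ^ (2 * s - 1) :=
          Real.rpow_le_rpow hδ0.le (min_le_right _ _) (by linarith)
      _ = t := by
          rw [← Real.rpow_mul ht0.le]
          have : 1 / (2 * s - 1) * (2 * s - 1) = 1 := by
            have : 2 * s - 1 ≠ 0 := by linarith
            field_simp
          rw [this, Real.rpow_one]
  obtain ⟨D, hD0, hD⟩ := hCm δ hδ0 (min_le_left _ _)
  refine ⟨c / 2 * (C1 + C2) + S * W * D + 1, by positivity, ?_⟩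
  intro u hu hur
  obtain ⟨husm, hucs, hut⟩ := hu
  have huc : Continuous u := husm.continuous
  set v1 : Euc N → ℝ := fun x => Real.cos (θ x) * u x with hv1
  set v2 : Euc N → ℝ := fun x => Real.sin (θ x) * u x with hv2
  have hv1c : Continuous v1 := by rw [hv1]; fun_prop
  have hv2c : Continuous v2 := by rw [hv2]; fun_prop
  have hv1t : testFun N univ v1 :=
    ⟨(Real.contDiff_cos.comp hθs).mul husm, hucs.mul_left, subset_univ _⟩
  have hv1z : ∀ x, 1 / 2 ≤ ‖x‖ → v1 x = 0 := by
    intro x hx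
    simp only [hv1]; rw [hθ1 x hx, Real.cos_pi_div_two, zero_mul]
  have hv2z : ∀ x, ‖x‖ ≤ 1 / 4 → v2 x = 0 := by
    intro x hx
    simp only [hv2]; rw [hθ0 x hx, Real.sin_zero, zero_mul]
  have hv2r : IsRadial N v2 := by
    intro x y hxy
    simp only [hv2]; rw [hθr x y hxy, hur x y hxy]
  have hsq : ∀ x, u x ^ 2 = v1 x ^ 2 + v2 x ^ 2 := by
    intro x
    simp only [hv1, hv2]
    linear_combination -(u x) ^ 2 * Real.sin_sq_add_cos_sq (θ x)
  -- finiteness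
  obtain ⟨K, hK⟩ := ContDiff.lipschitzWith_of_hasCompactSupport hucs husm (by simp)
  have hEu : EE N s (unitBall N) u ≠ ∞ := by
    apply EE_lip_ne_top N hN s hs u K
    intro x y
    have := hK.dist_le_mul x y
    rwa [Real.dist_eq, dist_eq_norm] at this
  have hIntble : ∀ f : Euc N → ℝ, Continuous f → IntegrableOn (fun x => f x ^ 2) (unitBall N) := fun f hf =>
    ((hf.pow 2).continuousOn.integrableOn_compact (isCompact_closedBall 0 1)).mono_set
      Metric.ball_subset_closedBall
  have hL2 : ∀ f : Euc N → ℝ, Continuous f → ∫⁻ x in unitBall N, ENNReal.ofReal (f x ^ 2) =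
      ENNReal.ofReal (∫ x in unitBall N, f x ^ 2) := fun f hf =>
    (ofReal_integral_eq_lintegral_ofReal (hIntble f hf) (Eventually.of_forall (fun _ => by positivity))).symm
  set Iu := ∫ x in unitBall N, u x ^ 2 with hIu
  have hIu0 : 0 ≤ Iu := integral_nonneg (fun _ => by positivity)
  have hI1 : ∫ x in unitBall N, v1 x ^ 2 ≤ Iu :=
    integral_mono (hIntble v1 hv1c) (hIntble u huc) (fun x => by
      simp only; rw [hsq x]; linarith [sq_nonneg (v2 x)])
  have hI2 : ∫ x in unitBall N, v2 x ^ 2 ≤ Iu :=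
    integral_mono (hIntble v2 hv2c) (hIntble u huc) (fun x => by
      simp only; rw [hsq x]; linarith [sq_nonneg (v1 x)])
  have hIMS := hC1 u huc.measurable
  rw [hL2 u huc] at hIMS
  have hrt : EE N s (unitBall N) u + ENNReal.ofReal C1 * ENNReal.ofReal Iu ≠ ∞ :=
    ENNReal.add_ne_top.mpr ⟨hEu, ENNReal.mul_ne_top ENNReal.ofReal_ne_top ENNReal.ofReal_ne_top⟩
  have hE12 := ENNReal.add_ne_top.mp (ne_top_of_le_ne_top hrt hIMS)
  obtain ⟨hE1, hE2⟩ := hE12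
  have hreal1 : (EE N s (unitBall N) v1).toReal + (EE N s (unitBall N) v2).toReal ≤
      (EE N s (unitBall N) u).toReal + C1 * Iu := by
    have := ENNReal.toReal_mono hrt hIMS
    rw [ENNReal.toReal_add hE1 hE2, ENNReal.toReal_add hEu
      (ENNReal.mul_ne_top ENNReal.ofReal_ne_top ENNReal.ofReal_ne_top), ENNReal.toReal_mul,
      ENNReal.toReal_ofReal hC10, ENNReal.toReal_ofReal hIu0] at this
    exact this
  -- inner part
  have hun := hC2 v1 hv1c.measurable (fun x hx => hv1z x hx.le)
  rw [hL2 v1 hv1c] at hun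
  have hrt2 : EE N s (unitBall N) v1 + ENNReal.ofReal C2 * ENNReal.ofReal (∫ x in unitBall N, v1 x ^ 2) ≠ ∞ :=
    ENNReal.add_ne_top.mpr ⟨hE1, ENNReal.mul_ne_top ENNReal.ofReal_ne_top ENNReal.ofReal_ne_top⟩
  have hEun := ne_top_of_le_ne_top hrt2 hun
  have hreal2 : (EE N s univ v1).toReal ≤ (EE N s (unitBall N) v1).toReal + C2 * Iu := by
    have := ENNReal.toReal_mono hrt2 hun
    rw [ENNReal.toReal_add hE1
      (ENNReal.mul_ne_top ENNReal.ofReal_ne_top ENNReal.ofReal_ne_top), ENNReal.toReal_mul,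
      ENNReal.toReal_ofReal hC20, ENNReal.toReal_ofReal (integral_nonneg (fun _ => by positivity))] at this
    exact this.trans (by gcongr)
  have hlp1 : lpNormOn N q univ v1 = lpNormOn N q (unitBall N) v1 := by
    unfold lpNormOn
    congr 1
    rw [Measure.restrict_univ, setIntegral_eq_integral_of_forall_compl_eq_zero]
    intro x hx
    simp only [unitBall, Metric.mem_ball, dist_zero_right, not_lt] at hx
    rw [hv1z x (by linarith), abs_zero, Real.zero_rpow (by linarith)]
  have hin : S * (lpNormOn N q (unitBall N) v1) ^ 2 ≤
      c / 2 * ((EE N s (unitBall N) v1).toReal + C2 * Iu) := by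
    rw [← hlp1]
    refine (sobolev_le N hN s hs univ v1 hv1t).trans ?_
    rw [gagliardo_eq N s univ v1 hv1c.measurable hEun]
    gcongr
  -- outer part
  set e2 := (EE N s (unitBall N) v2).toReal with he2
  have he20 : 0 ≤ e2 := ENNReal.toReal_nonneg
  have hout : S * (lpNormOn N q (unitBall N) v2) ^ 2 ≤ c / 2 * e2 + S * W * D * Iu := by
    have hb : ∀ x ∈ unitBall N, v2 x ^ 2 ≤ Cm * t * e2 + D * Iu := by
      intro x hx
      by_cases hx4 : ‖x‖ ≤ 1 / 4
      · rw [hv2z x hx4, zero_pow two_ne_zero]; positivity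
      · have hx1 : ‖x‖ < 1 := by simpa [unitBall] using hx
        refine (hD v2 hv2c hv2r hE2 x (not_le.mp hx4).le hx1).trans ?_
        gcongr
    have hl := hW v2 hv2c _ (by positivity) hb
    have hkey : S * W * Cm * t ≤ c / 2 := by
      rw [ht, ← mul_div_assoc, div_le_iff₀ (by positivity)]
      nlinarith [mul_nonneg (mul_nonneg hS0 hW0) hCm0]
    calc S * (lpNormOn N q (unitBall N) v2) ^ 2 ≤ S * (W * (Cm * t * e2 + D * Iu)) := by gcongr
      _ = (S * W * Cm * t) * e2 + S * W * D * Iu := by ring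
      _ ≤ _ := by gcongr
  have hm := lp_mink N q hq2 u v1 v2 huc hv1c hv2c hsq
  have hm2 := mul_le_mul_of_nonneg_left hm hS0
  have hmul := mul_le_mul_of_nonneg_left hreal1 (by positivity : 0 ≤ c / 2)
  rw [gagliardo_eq N s (unitBall N) u huc.measurable hEu]
  rw [ge_iff_le, sub_le_iff_le_add]
  nlinarith
end
end
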